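/- arXiv:1007.1118 — 4 statements merged into one kernel-verified Lean document; each statement's English description precedes it below -/
import Mathlib

section
/- Let G be a finitely presented group, given as G = PresentedGroup R for a finite set of relators R ⊆ FreeGroup (Fin n), and suppose that G contains a subgroup isomorphic to the direct product of two nonabelian free groups of rank 2, i.e. there is an injective group homomorphism (FreeGroup Bool × FreeGroup Bool) → G. Then there is no computable function f : List Word → List Word → Bool such that for all lists S and T of words, f S T = true if and only if the subgroup of G generated by the images of the words in S is isomorphic to the subgroup of G generated by the images of the words in T. -/
/-- The subgroup of the finitely presented group `PresentedGroup R` generated by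
the images of the words in the list `S`. -/
def wordsSubgroup {n : ℕ} (R : Set (FreeGroup (Fin n)))
    (S : List (List (Fin n × Bool))) : Subgroup (PresentedGroup R) :=
  Subgroup.closure {g | ∃ u ∈ S, g = PresentedGroup.mk R (FreeGroup.mk u)}

namespace FreeGroup

/-- A free group on at least two generators has trivial center. -/
theorem eq_one_of_forall_commute {X : Type*} [Nontrivial X] {z : FreeGroup X}
    (hz : ∀ x, Commute z (of x)) : z = 1 := by
  classical
  rcases hw : z.toWord with _ | ⟨⟨p, b⟩, L⟩
  · exact toWord_eq_nil_iff.1 hw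
  exfalso
  obtain ⟨q, hq⟩ := exists_ne p
  have hred : IsReduced ((q, true) :: z.toWord) := by
    rw [hw, isReduced_cons_cons]
    exact ⟨fun h => absurd h hq, hw ▸ isReduced_toWord⟩
  have h1 : (of q * z).toWord = (q, true) :: z.toWord := by
    rw [toWord_mul, toWord_of]
    exact hred.reduce_eq
  have h2 : (z * of q).toWord = reduce (z.toWord ++ [(q, true)]) := by
    rw [toWord_mul, toWord_of]
  have h3 : reduce (z.toWord ++ [(q, true)]) = (q, true) :: z.toWord := by
    rw [← h2, (hz q).eq, h1]
  have h4 := (reduce.red (L := z.toWord ++ [(q, true)])).sublist.eq_of_length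
    (by rw [h3]; simp)
  rw [h3, hw] at h4
  simp only [List.cons_append, List.cons.injEq, Prod.mk.injEq] at h4
  exact hq h4.1.1

theorem commute_of_subsingleton {X : Type*} [Subsingleton X] (a b : FreeGroup X) :
    Commute a b := by
  induction a using FreeGroup.induction_on with
  | C1 => exact Commute.one_left _
  | of x =>
    induction b using FreeGroup.induction_on with
    | C1 => exact Commute.one_right _
    | of y => rw [Subsingleton.elim x y]
    | inv_of y h => exact h.inv_right
    | mul u v hu hv => exact hu.mul_right hv
  | inv_of x h => exact h.inv_left
  | mul u v hu hv => exact hu.mul_left hv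

/-- Commutation is transitive on nontrivial elements of a free group. -/
theorem commute_trans {X : Type*} {a b c : FreeGroup X} (ha : a ≠ 1)
    (hb : Commute a b) (hc : Commute a c) : Commute b c := by
  let H : Subgroup (FreeGroup X) := Subgroup.centralizer {a}
  have hH : ∀ g, g ∈ H ↔ Commute a g := fun g =>
    Subgroup.mem_centralizer_singleton_iff.trans eq_comm
  let φ := IsFreeGroup.mulEquiv H
  let a' : H := ⟨a, (hH a).2 (Commute.refl a)⟩
  let b' : H := ⟨b, (hH b).2 hb⟩
  let c' : H := ⟨c, (hH c).2 hc⟩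
  suffices h : Commute b' c' from h.map H.subtype
  rcases subsingleton_or_nontrivial (IsFreeGroup.Generators H) with h | h
  · have := (commute_of_subsingleton (φ.symm b') (φ.symm c')).map φ
    simpa using this
  · exfalso
    have h1 : φ.symm a' = 1 := eq_one_of_forall_commute fun x => by
      have h2 : Commute a' (φ (of x)) := Subtype.ext ((hH _).1 (φ (of x)).2)
      simpa using h2.map φ.symm
    have h2 : a' = 1 := by simpa using h1
    exact ha (congrArg Subtype.val h2)

end FreeGroup

/-- The elements of a group that have a non-commutative centralizer. -/
def nonabelianCentralizer (G : Type*) [Group G] : Set G :=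
  {g | ∃ a b, Commute g a ∧ Commute g b ∧ ¬ Commute a b}

/-- Products of two elements with non-commutative centralizer. -/
def nonabelianCentralizerProducts (G : Type*) [Group G] : Set G :=
  {g | ∃ a ∈ nonabelianCentralizer G, ∃ b ∈ nonabelianCentralizer G, g = a * b}

theorem MulEquiv.map_mem_nonabelianCentralizer {G H : Type*} [Group G] [Group H] (φ : G ≃* H)
    {g : G} (hg : g ∈ nonabelianCentralizer G) : φ g ∈ nonabelianCentralizer H := by
  obtain ⟨a, b, ha, hb, hab⟩ := hg
  refine ⟨φ a, φ b, ha.map φ, hb.map φ, fun h => hab ?_⟩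
  simpa using h.map φ.symm

theorem MulEquiv.map_mem_nonabelianCentralizerProducts {G H : Type*} [Group G] [Group H]
    (φ : G ≃* H) {g : G} (hg : g ∈ nonabelianCentralizerProducts G) :
    φ g ∈ nonabelianCentralizerProducts H := by
  obtain ⟨a, ha, b, hb, rfl⟩ := hg
  exact ⟨φ a, φ.map_mem_nonabelianCentralizer ha, φ b, φ.map_mem_nonabelianCentralizer hb,
    map_mul φ a b⟩

/-- The fiber square of the quotient map `F → F ⧸ N`. -/
def fiberSquare {F : Type*} [Group F] (N : Subgroup F) [N.Normal] : Subgroup (F × F) :=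
  MonoidHom.eqLocus ((QuotientGroup.mk' N).comp (MonoidHom.fst F F))
    ((QuotientGroup.mk' N).comp (MonoidHom.snd F F))

section fiberSquare

variable {F : Type*} [Group F] {N : Subgroup F} [N.Normal]

theorem mem_fiberSquare {g : F × F} :
    g ∈ fiberSquare N ↔ (g.1 : F ⧸ N) = (g.2 : F ⧸ N) := Iff.rfl

theorem fst_mem_iff_snd_mem {g : F × F} (hg : g ∈ fiberSquare N) : g.1 ∈ N ↔ g.2 ∈ N := by
  rw [← QuotientGroup.eq_one_iff, ← QuotientGroup.eq_one_iff (N := N) g.2, mem_fiberSquare.1 hg]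

theorem inl_mem_fiberSquare {a : F} : ((a, 1) : F × F) ∈ fiberSquare N ↔ a ∈ N := by
  rw [mem_fiberSquare, QuotientGroup.mk_one, QuotientGroup.eq_one_iff]

theorem inr_mem_fiberSquare {a : F} : ((1, a) : F × F) ∈ fiberSquare N ↔ a ∈ N := by
  rw [mem_fiberSquare, QuotientGroup.mk_one, eq_comm, QuotientGroup.eq_one_iff]

theorem diag_mem_fiberSquare (a : F) : ((a, a) : F × F) ∈ fiberSquare N :=
  mem_fiberSquare.2 rfl

/-- The fiber square over a finitely presented quotient is generated by the diagonal and the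
relators. -/
theorem fiberSquare_normalClosure {X : Type*} (rels : Set (FreeGroup X)) :
    fiberSquare (Subgroup.normalClosure rels) =
      Subgroup.closure (Set.range (fun x => (FreeGroup.of x, FreeGroup.of x)) ∪
        (fun w => (1, w)) '' rels) := by
  set K := Subgroup.closure (Set.range (fun x => (FreeGroup.of x, FreeGroup.of x)) ∪
        (fun w => ((1 : FreeGroup X), w)) '' rels) with hK
  have hdiag : ∀ w : FreeGroup X, (w, w) ∈ K := fun w => by
    induction w using FreeGroup.induction_on with
    | C1 => exact K.one_mem
    | of x => exact Subgroup.subset_closure (Or.inl ⟨x, rfl⟩)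
    | inv_of x h => exact K.inv_mem h
    | mul u v hu hv => exact K.mul_mem hu hv
  have hright : ∀ w ∈ Subgroup.normalClosure rels, ((1 : FreeGroup X), w) ∈ K := by
    intro w hw
    have hle : Subgroup.normalClosure rels ≤ K.comap (MonoidHom.inr _ _) := by
      refine Subgroup.closure_le _ |>.2 fun v hv => ?_
      obtain ⟨u, hu, hv⟩ := Group.mem_conjugatesOfSet_iff.1 hv
      obtain ⟨c, rfl⟩ := isConj_iff.1 hv
      have h1 : ((1 : FreeGroup X), u) ∈ K := Subgroup.subset_closure (Or.inr ⟨u, hu, rfl⟩)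
      have h2 := K.mul_mem (K.mul_mem (hdiag c) h1) (K.inv_mem (hdiag c))
      simpa using h2
    exact hle hw
  apply le_antisymm
  · rintro ⟨a, b⟩ h
    have h1 : a⁻¹ * b ∈ Subgroup.normalClosure rels := QuotientGroup.eq.1 (mem_fiberSquare.1 h)
    have h2 := K.mul_mem (hdiag a) (hright _ h1)
    simpa using h2
  · rw [hK, Subgroup.closure_le]
    rintro _ (⟨x, rfl⟩ | ⟨w, hw, rfl⟩)
    · exact diag_mem_fiberSquare _
    · exact inr_mem_fiberSquare.2 (Subgroup.subset_normalClosure hw)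

end fiberSquare

theorem mem_nonabelianCentralizerProducts_fiberSquare {X : Type*} {N : Subgroup (FreeGroup X)}
    [N.Normal] {a b : FreeGroup X} (ha : a ∈ N) (hb : b ∈ N) (hab : ¬ Commute a b)
    (g : fiberSquare N) :
    g ∈ nonabelianCentralizerProducts (fiberSquare N) ↔ (g : FreeGroup X × FreeGroup X).1 ∈ N := by
  have key : ∀ g ∈ nonabelianCentralizer (fiberSquare N),
      (g : FreeGroup X × FreeGroup X).1 ∈ N := by
    rintro ⟨⟨u, v⟩, hg⟩ ⟨⟨⟨c₁, c₂⟩, hc⟩, ⟨⟨d₁, d₂⟩, hd⟩, h1, h2, h3⟩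
    replace h1 := h1.map (fiberSquare N).subtype
    replace h2 := h2.map (fiberSquare N).subtype
    replace h3 : ¬ Commute (c₁, c₂) (d₁, d₂) := fun h => h3 (Subtype.ext h.eq)
    simp only [Subgroup.subtype_apply, Prod.commute_iff] at h1 h2 h3
    by_cases hu : u = 1
    · simp [hu]
    by_cases hv : v = 1
    · rw [fst_mem_iff_snd_mem hg]
      simp [hv]
    exact absurd ⟨FreeGroup.commute_trans hu h1.1 h2.1, FreeGroup.commute_trans hv h1.2 h2.2⟩ h3
  constructor
  · rintro ⟨g, hg, h, hh, rfl⟩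
    exact N.mul_mem (key g hg) (key h hh)
  · intro hg
    have hg' := (fst_mem_iff_snd_mem g.2).1 hg
    refine ⟨⟨(g.1.1, 1), inl_mem_fiberSquare.2 hg⟩, ?_, ⟨(1, g.1.2), inr_mem_fiberSquare.2 hg'⟩,
      ?_, Subtype.ext (by simp)⟩
    · refine ⟨⟨(1, a), inr_mem_fiberSquare.2 ha⟩, ⟨(1, b), inr_mem_fiberSquare.2 hb⟩,
        Subtype.ext (by simp), Subtype.ext (by simp), fun h => hab ?_⟩
      exact h.map ((MonoidHom.snd _ _).comp (fiberSquare N).subtype)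
    · refine ⟨⟨(a, 1), inl_mem_fiberSquare.2 ha⟩, ⟨(b, 1), inl_mem_fiberSquare.2 hb⟩,
        Subtype.ext (by simp), Subtype.ext (by simp), fun h => hab ?_⟩
      exact h.map ((MonoidHom.fst _ _).comp (fiberSquare N).subtype)

/-- Fiber squares of free groups over a quotient with an involution and over a quotient without
involutions are not isomorphic. -/
theorem isEmpty_fiberSquare_mulEquiv {X : Type*} {N N' : Subgroup (FreeGroup X)}
    [N.Normal] [N'.Normal] {a b : FreeGroup X} (hab : ¬ Commute a b)
    (ha : a ∈ N) (hb : b ∈ N) (ha' : a ∈ N') (hb' : b ∈ N')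
    {e : FreeGroup X} (he : e ∉ N) (he2 : e ^ 2 ∈ N) (hN' : ∀ g, g ^ 2 ∈ N' → g ∈ N') :
    IsEmpty (fiberSquare N ≃* fiberSquare N') := by
  refine ⟨fun φ => he ?_⟩
  let g : fiberSquare N := ⟨(e, e), diag_mem_fiberSquare e⟩
  have h1 : g ^ 2 ∈ nonabelianCentralizerProducts (fiberSquare N) :=
    (mem_nonabelianCentralizerProducts_fiberSquare ha hb hab _).2 he2
  have h2 := φ.map_mem_nonabelianCentralizerProducts h1
  rw [map_pow, mem_nonabelianCentralizerProducts_fiberSquare ha' hb' hab] at h2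
  have h3 := (mem_nonabelianCentralizerProducts_fiberSquare ha' hb' hab (φ g)).2 (hN' _ h2)
  have h4 := φ.symm.map_mem_nonabelianCentralizerProducts h3
  rw [φ.symm_apply_apply, mem_nonabelianCentralizerProducts_fiberSquare ha hb hab] at h4
  exact h4

/-- A finite system of rules `α u + p ↦ β u + q` on integer vectors, where the multipliers `α` and
`β` act coordinatewise and have no zero entries. -/
structure AffineSystem (I : Type) where
  /-- The index type of the rules. -/
  Rule : Type
  finite_rule : Finite Rule
  /-- The multiplier of the left-hand side of a rule. -/
  srcMul : Rule → I → ℤ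
  /-- The offset of the left-hand side of a rule. -/
  srcOff : Rule → I → ℤ
  /-- The multiplier of the right-hand side of a rule. -/
  tgtMul : Rule → I → ℤ
  /-- The offset of the right-hand side of a rule. -/
  tgtOff : Rule → I → ℤ
  srcMul_ne_zero : ∀ r i, srcMul r i ≠ 0
  tgtMul_ne_zero : ∀ r i, tgtMul r i ≠ 0

/-- One application of a rule of an affine system. -/
def AffineSystem.Step {I : Type} (A : AffineSystem I) (v w : I → ℤ) : Prop :=
  ∃ (r : A.Rule) (u : I → ℤ), v = A.srcMul r * u + A.srcOff r ∧ w = A.tgtMul r * u + A.tgtOff r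

/-- In a deterministic system, everything connected to a terminal point leads to it. -/
theorem Relation.EqvGen.reflTransGen_of_functional {α : Type*} {r : α → α → Prop} {h : α}
    (hr : ∀ a b c, r a b → r a c → b = c) (hh : ∀ a, r h a → a = h) {a : α}
    (H : Relation.EqvGen r a h) : Relation.ReflTransGen r a h := by
  have key : ∀ a b, Relation.EqvGen r a b →
      (Relation.ReflTransGen r a h ↔ Relation.ReflTransGen r b h) := by
    intro a b hab
    induction hab with
    | rel a b hab =>
      refine ⟨fun H => ?_, fun H => H.head hab⟩
      rcases H.cases_head with rfl | ⟨c, hac, hc⟩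
      · rw [hh b hab]
      · rwa [hr a b c hab hac]
    | refl => rfl
    | symm _ _ _ ih => exact ih.symm
    | trans _ _ _ _ _ ih₁ ih₂ => exact ih₁.trans ih₂
  exact (key a h H).2 .refl

theorem Int.mul_add_inj_of_lt {m x y : ℤ} {c d : ℕ} (hc : (c : ℤ) < m) (hd : (d : ℤ) < m)
    (h : m * x + c = m * y + d) : x = y ∧ c = d := by
  have hm : 0 < m := lt_of_le_of_lt (Int.natCast_nonneg c) hc
  have h1 := congrArg (· % m) h
  simp only [Int.mul_add_emod_self_left, Int.emod_eq_of_lt (Int.natCast_nonneg _) hc,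
    Int.emod_eq_of_lt (Int.natCast_nonneg _) hd] at h1
  have h2 : m * x = m * y := by omega
  exact ⟨mul_left_cancel₀ hm.ne' h2, by exact_mod_cast h1⟩

namespace StackMachine

variable {Q K Γ : Type}

/-- One step of a finite automaton with stacks: depending on the state and the top letters, the
state changes and the top letters are replaced by words. -/
def step (μ : Q → (K → Option Γ) → Q × (K → List Γ)) (c : Q × (K → List Γ)) :
    Q × (K → List Γ) :=
  ((μ c.1 fun k => (c.2 k).head?).1,
    fun k => (μ c.1 fun k => (c.2 k).head?).2 k ++ (c.2 k).tail)

variable [Fintype Q] [Fintype Γ]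

/-- The base of the number system that encodes stacks. -/
def base (Γ : Type) [Fintype Γ] : ℕ := Fintype.card Γ + 1

/-- The digit of a letter; the digit `0` is reserved for the empty stack. -/
noncomputable def digit : Option Γ → ℕ
  | none => 0
  | some g => Fintype.equivFin Γ g + 1

theorem digit_lt (d : Option Γ) : digit d < base Γ := by
  cases d <;> simp [digit, base]

theorem digit_injective : Function.Injective (digit (Γ := Γ)) := by
  rintro (_ | a) (_ | b) h <;> simp [digit, Fin.val_inj] at h ⊢
  exact h

/-- The number that encodes a stack. -/
noncomputable def code : List Γ → ℕ
  | [] => 0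
  | g :: l => digit (some g) + base Γ * code l

theorem code_eq (l : List Γ) : code l = base Γ * code l.tail + digit l.head? := by
  cases l with
  | nil => simp [code, digit]
  | cons g l => simp [code, add_comm]

theorem code_append (l l' : List Γ) : code (l ++ l') = base Γ ^ l.length * code l' + code l := by
  induction l with
  | nil => simp [code]
  | cons g l ih => simp only [List.cons_append, code, ih, List.length_cons, pow_succ]; ring

theorem code_injective : Function.Injective (code (Γ := Γ)) := by
  intro l
  induction l with
  | nil =>
    rintro (_ | ⟨g, l⟩) h
    · rfl
    · simp only [code, digit] at h
      omega
  | cons a l ih =>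
    rintro (_ | ⟨g, l'⟩) h
    · simp [code, digit] at h
    · have h' : (base Γ : ℤ) * code l + digit (some a) = base Γ * code l' + digit (some g) := by
        simp only [code] at h
        rw [add_comm, add_comm (_ * _)]
        exact_mod_cast h
      have h2 := Int.mul_add_inj_of_lt (by exact_mod_cast digit_lt _)
        (by exact_mod_cast digit_lt _) h'
      rw [ih (by exact_mod_cast h2.1), Option.some.inj (digit_injective h2.2)]

/-- The vector that encodes a configuration. -/
noncomputable def encode (c : Q × (K → List Γ)) : Option K → ℤ
  | none => (Fintype.equivFin Q c.1 : ℕ)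
  | some k => code (c.2 k)

theorem encode_injective : Function.Injective (encode (Q := Q) (K := K) (Γ := Γ)) := by
  rintro ⟨q, S⟩ ⟨q', S'⟩ h
  have h1 : q = q' := by simpa [encode, Fin.val_inj] using congrFun h none
  have h2 : S = S' := funext fun k => code_injective (by simpa [encode] using congrFun h (some k))
  rw [h1, h2]

/-- The affine system that simulates a stack machine. -/
noncomputable def affineSystem [Finite K] (μ : Q → (K → Option Γ) → Q × (K → List Γ)) :
    AffineSystem (Option K) where
  Rule := Q × (K → Option Γ)
  finite_rule := inferInstance
  srcMul _ := fun
    | none => Fintype.card Q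
    | some _ => base Γ
  srcOff r := fun
    | none => (Fintype.equivFin Q r.1 : ℕ)
    | some k => digit (r.2 k)
  tgtMul r := fun
    | none => Fintype.card Q
    | some k => base Γ ^ ((μ r.1 r.2).2 k).length
  tgtOff r := fun
    | none => (Fintype.equivFin Q (μ r.1 r.2).1 : ℕ)
    | some k => code ((μ r.1 r.2).2 k)
  srcMul_ne_zero r i := by
    have : Nonempty Q := ⟨r.1⟩
    cases i <;> simp [base, Fintype.card_ne_zero]
    omega
  tgtMul_ne_zero r i := by
    have : Nonempty Q := ⟨r.1⟩
    cases i <;> simp [base, Fintype.card_ne_zero]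
    omega

variable [Finite K] (μ : Q → (K → Option Γ) → Q × (K → List Γ))

theorem affineSystem_rule_unique {r r' : (affineSystem μ).Rule} {u u' : Option K → ℤ}
    (h : (affineSystem μ).srcMul r * u + (affineSystem μ).srcOff r =
      (affineSystem μ).srcMul r' * u' + (affineSystem μ).srcOff r') : r = r' ∧ u = u' := by
  have h0 := Int.mul_add_inj_of_lt (Int.ofNat_lt.2 (Fin.isLt _)) (Int.ofNat_lt.2 (Fin.isLt _))
    (congrFun h none)
  have hk := fun k => Int.mul_add_inj_of_lt (Int.ofNat_lt.2 (digit_lt _))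
    (Int.ofNat_lt.2 (digit_lt _)) (congrFun h (some k))
  refine ⟨Prod.ext ?_ (funext fun k => digit_injective (hk k).2), funext fun i => ?_⟩
  · exact (Fintype.equivFin Q).injective (Fin.val_injective h0.2)
  · cases i with
    | none => exact h0.1
    | some k => exact (hk k).1

theorem affineSystem_step (c : Q × (K → List Γ)) :
    (affineSystem μ).Step (encode c) (encode (step μ c)) := by
  refine ⟨(c.1, fun k => (c.2 k).head?), fun | none => 0 | some k => code (c.2 k).tail, ?_, ?_⟩
  · ext (_ | k)
    · simp [affineSystem, encode]
    · simp [affineSystem, encode, code_eq (c.2 k)]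
  · ext (_ | k)
    · simp [affineSystem, encode, step]
    · simp [affineSystem, encode, step, code_append]

theorem affineSystem_step_functional (a b c : Option K → ℤ) (hb : (affineSystem μ).Step a b)
    (hc : (affineSystem μ).Step a c) : b = c := by
  obtain ⟨r, u, h1, rfl⟩ := hb
  obtain ⟨r', u', h2, rfl⟩ := hc
  obtain ⟨rfl, rfl⟩ := affineSystem_rule_unique μ (h1.symm.trans h2)
  rfl

/-- The affine system of a stack machine simulates it faithfully. -/
theorem eqvGen_affineSystem_iff {c h : Q × (K → List Γ)} (hh : step μ h = h) :
    Relation.EqvGen (affineSystem μ).Step (encode c) (encode h) ↔ ∃ n, (step μ)^[n] c = h := by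
  constructor
  · intro H
    have H' := H.reflTransGen_of_functional (affineSystem_step_functional μ) fun a ha =>
      affineSystem_step_functional μ _ _ _ ha (by simpa [hh] using affineSystem_step μ h)
    generalize hx : encode c = x at H'
    clear H
    induction H' using Relation.ReflTransGen.head_induction_on generalizing c with
    | refl => exact ⟨0, encode_injective hx⟩
    | head hab _ ih =>
      subst hx
      obtain ⟨n, hn⟩ := ih
        (affineSystem_step_functional μ _ _ _ (affineSystem_step μ c) hab)
      exact ⟨n + 1, hn⟩
  · rintro ⟨n, hn⟩
    induction n generalizing c with
    | zero => subst hn; exact .refl _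
    | succ n ih => exact .trans _ _ _ (.rel _ _ (affineSystem_step μ c)) (ih hn)

end StackMachine

namespace StackMachine

open Turing Turing.TM2

section Simulation

variable {K Γ Λ σ : Type} [DecidableEq K] (M : Λ → TM2.Stmt (fun _ : K => Γ) Λ σ)

/-- The instruction-wise transition function of a `TM2` machine. -/
def micro : Option (TM2.Stmt (fun _ : K => Γ) Λ σ) × σ → (K → Option Γ) →
    (Option (TM2.Stmt (fun _ : K => Γ) Λ σ) × σ) × (K → List Γ)
  | (none, v), d => ((none, v), fun k => (d k).toList)
  | (some (.push k f q), v), d =>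
    ((some q, v), Function.update (fun k => (d k).toList) k (f v :: (d k).toList))
  | (some (.peek k f q), v), d => ((some q, f v (d k)), fun k => (d k).toList)
  | (some (.pop k f q), v), d =>
    ((some q, f v (d k)), Function.update (fun k => (d k).toList) k [])
  | (some (.load f q), v), d => ((some q, f v), fun k => (d k).toList)
  | (some (.branch f q₁ q₂), v), d => ((some (cond (f v) q₁ q₂), v), fun k => (d k).toList)
  | (some (.goto f), v), d => ((some (M (f v)), v), fun k => (d k).toList)
  | (some .halt, v), d => ((none, v), fun k => (d k).toList)

/-- The instruction-wise configuration that corresponds to a `TM2` configuration. -/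
def ofCfg (c : TM2.Cfg (fun _ : K => Γ) Λ σ) :
    (Option (TM2.Stmt (fun _ : K => Γ) Λ σ) × σ) × (K → List Γ) :=
  ((c.l.map M, c.var), c.stk)

/-- The outcome of the computation that starts at an instruction-wise configuration. -/
def outcome : (Option (TM2.Stmt (fun _ : K => Γ) Λ σ) × σ) × (K → List Γ) →
    Part (TM2.Cfg (fun _ : K => Γ) Λ σ)
  | ((none, v), S) => StateTransition.eval (TM2.step M) ⟨none, v, S⟩
  | ((some q, v), S) => StateTransition.eval (TM2.step M) (stepAux q v S)

theorem toList_head?_append_tail (l : List Γ) : l.head?.toList ++ l.tail = l := by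
  cases l <;> rfl

theorem update_append_tail (S : K → List Γ) (k : K) (l : List Γ) :
    (fun i => Function.update (fun i => (S i).head?.toList) k l i ++ (S i).tail) =
      Function.update S k (l ++ (S k).tail) := by
  ext1 i
  by_cases h : i = k
  · subst h; simp
  · simp [h, toList_head?_append_tail]

theorem step_micro_none (v : σ) (S : K → List Γ) :
    step (micro M) ((none, v), S) = ((none, v), S) := by
  simp [step, micro, toList_head?_append_tail]

theorem step_micro_push (k f q) (v : σ) (S : K → List Γ) :
    step (micro M) ((some (.push k f q), v), S) =
      ((some q, v), Function.update S k (f v :: S k)) := by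
  simp [step, micro, update_append_tail, toList_head?_append_tail]

theorem step_micro_peek (k f q) (v : σ) (S : K → List Γ) :
    step (micro M) ((some (.peek k f q), v), S) = ((some q, f v (S k).head?), S) := by
  simp [step, micro, toList_head?_append_tail]

theorem step_micro_pop (k f q) (v : σ) (S : K → List Γ) :
    step (micro M) ((some (.pop k f q), v), S) =
      ((some q, f v (S k).head?), Function.update S k (S k).tail) := by
  simp [step, micro, update_append_tail]

theorem step_micro_load (f q) (v : σ) (S : K → List Γ) :
    step (micro M) ((some (.load f q), v), S) = ((some q, f v), S) := by
  simp [step, micro, toList_head?_append_tail]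

theorem step_micro_branch (f q₁ q₂) (v : σ) (S : K → List Γ) :
    step (micro M) ((some (.branch f q₁ q₂), v), S) = ((some (cond (f v) q₁ q₂), v), S) := by
  simp [step, micro, toList_head?_append_tail]

theorem step_micro_goto (f) (v : σ) (S : K → List Γ) :
    step (micro M) ((some (.goto f), v), S) = ((some (M (f v)), v), S) := by
  simp [step, micro, toList_head?_append_tail]

theorem step_micro_halt (v : σ) (S : K → List Γ) :
    step (micro M) ((some .halt, v), S) = ((none, v), S) := by
  simp [step, micro, toList_head?_append_tail]

theorem exists_iterate_step_micro (q) (v : σ) (S : K → List Γ) :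
    ∃ n, (step (micro M))^[n] ((some q, v), S) = ofCfg M (stepAux q v S) := by
  induction q generalizing v S with
  | push k f q ih =>
    obtain ⟨n, hn⟩ := ih v (Function.update S k (f v :: S k))
    exact ⟨n + 1, by rw [Function.iterate_succ_apply, step_micro_push, hn]; rfl⟩
  | peek k f q ih =>
    obtain ⟨n, hn⟩ := ih (f v (S k).head?) S
    exact ⟨n + 1, by rw [Function.iterate_succ_apply, step_micro_peek, hn]; rfl⟩
  | pop k f q ih =>
    obtain ⟨n, hn⟩ := ih (f v (S k).head?) (Function.update S k (S k).tail)
    exact ⟨n + 1, by rw [Function.iterate_succ_apply, step_micro_pop, hn]; rfl⟩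
  | load f q ih =>
    obtain ⟨n, hn⟩ := ih (f v) S
    exact ⟨n + 1, by rw [Function.iterate_succ_apply, step_micro_load, hn]; rfl⟩
  | branch f q₁ q₂ ih₁ ih₂ =>
    simp only [stepAux]
    rcases h : f v
    · obtain ⟨n, hn⟩ := ih₂ v S
      exact ⟨n + 1, by rw [Function.iterate_succ_apply, step_micro_branch, h]; exact hn⟩
    · obtain ⟨n, hn⟩ := ih₁ v S
      exact ⟨n + 1, by rw [Function.iterate_succ_apply, step_micro_branch, h]; exact hn⟩
  | goto f => exact ⟨1, step_micro_goto M f v S⟩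
  | halt => exact ⟨1, step_micro_halt M v S⟩

theorem eval_stepAux (l : Λ) (v : σ) (S : K → List Γ) :
    StateTransition.eval (TM2.step M) (stepAux (M l) v S) =
      StateTransition.eval (TM2.step M) ⟨some l, v, S⟩ :=
  (StateTransition.reaches_eval (f := TM2.step M) (a := ⟨some l, v, S⟩) (.single rfl)).symm

theorem outcome_step_micro (c : (Option (TM2.Stmt (fun _ : K => Γ) Λ σ) × σ) × (K → List Γ)) :
    outcome M (step (micro M) c) = outcome M c := by
  obtain ⟨⟨_ | q, v⟩, S⟩ := c
  · rw [step_micro_none]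
  cases q with
  | push k f q => rw [step_micro_push]; rfl
  | peek k f q => rw [step_micro_peek]; rfl
  | pop k f q => rw [step_micro_pop]; rfl
  | load f q => rw [step_micro_load]; rfl
  | branch f q₁ q₂ =>
    rw [step_micro_branch]
    simp only [outcome, stepAux]
    cases f v <;> rfl
  | goto f =>
    rw [step_micro_goto]
    exact eval_stepAux M (f v) v S
  | halt => rw [step_micro_halt]; rfl

/-- The instruction-wise machine reaches a halting configuration if and only if the `TM2` machine
halts there. -/
theorem exists_iterate_step_micro_eq_iff (c : TM2.Cfg (fun _ : K => Γ) Λ σ) (v : σ)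
    (S : K → List Γ) :
    (∃ n, (step (micro M))^[n] (ofCfg M c) = ((none, v), S)) ↔
      ⟨none, v, S⟩ ∈ StateTransition.eval (TM2.step M) c := by
  have houtcome : ∀ c, outcome M (ofCfg M c) = StateTransition.eval (TM2.step M) c := by
    rintro ⟨_ | l, v, S⟩
    · rfl
    · exact eval_stepAux M l v S
  constructor
  · rintro ⟨n, hn⟩
    have h : ∀ n x, outcome M ((step (micro M))^[n] x) = outcome M x := by
      intro n
      induction n with
      | zero => exact fun _ => rfl
      | succ n ih => exact fun x => (ih _).trans (outcome_step_micro M x)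
    rw [← houtcome, ← h n, hn]
    exact StateTransition.mem_eval.2 ⟨.refl, rfl⟩
  · intro h
    have h' := (StateTransition.mem_eval.1 h).1
    clear h
    induction h' using Relation.ReflTransGen.head_induction_on with
    | refl => exact ⟨0, rfl⟩
    | @head a b hab _ ih =>
      obtain ⟨n, hn⟩ := ih
      obtain ⟨_ | l, w, T⟩ := a
      · exact absurd hab (by simp)
      · obtain ⟨m, hm⟩ := exists_iterate_step_micro M (M l) w T
        have hab' : stepAux (M l) w T = b := by simpa using hab
        refine ⟨n + m, ?_⟩
        rw [Function.iterate_add_apply, ← hn, ← hab', ← hm]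
        rfl

open scoped Classical in
/-- The instructions reachable from a supporting set of labels are closed under transitions. -/
theorem micro_mem [Inhabited Λ] [Fintype σ] {L : Finset Λ} (hL : TM2.Supports M L)
    (s : Option (TM2.Stmt (fun _ : K => Γ) Λ σ) × σ) (d : K → Option Γ)
    (hs : s.1 ∈ TM2.stmts M L) : (micro M s d).1.1 ∈ TM2.stmts M L := by
  obtain ⟨_ | q, v⟩ := s
  · exact hs
  have hsub : ∀ q' ∈ TM2.stmts₁ q, some q' ∈ TM2.stmts M L := fun q' h => TM2.stmts_trans h hs
  cases q with
  | branch f q₁ q₂ =>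
    refine hsub _ ?_
    cases f v <;> simp [stmts₁, stmts₁_self]
  | goto f =>
    have h := TM2.stmts_supportsStmt hL hs v
    simp only [micro, stmts, Finset.some_mem_insertNone, Finset.mem_biUnion]
    exact ⟨f v, h, stmts₁_self⟩
  | halt => simp [micro, stmts]
  | _ => exact hsub _ (by simp [stmts₁, stmts₁_self])

/-- Halting of a `TM2` machine with finitely many states in a given configuration is a
connectedness problem for an affine system. -/
theorem exists_affineSystem [Fintype K] [Fintype Γ] [Inhabited Λ] [Fintype σ] {L : Finset Λ}
    (hL : TM2.Supports M L) (l : Λ) (hl : l ∈ L) (v w : σ) (T : K → List Γ) :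
    ∃ (A : AffineSystem (Option K)) (x : ℤ) (h : Option K → ℤ), ∀ S : K → List Γ,
      Relation.EqvGen A.Step (fun i => i.elim x fun k => (code (S k) : ℤ)) h ↔
        ⟨none, w, T⟩ ∈ StateTransition.eval (TM2.step M) ⟨some l, v, S⟩ := by
  classical
  let Q := {s : Option (TM2.Stmt (fun _ : K => Γ) Λ σ) × σ // s.1 ∈ TM2.stmts M L}
  have : Finite Q := Finite.of_injective
    (fun s : Q => ((⟨s.1.1, s.2⟩, s.1.2) : TM2.stmts M L × σ)) fun a b h => by
      simp only [Prod.mk.injEq, Subtype.mk.injEq] at h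
      exact Subtype.ext (Prod.ext h.1 h.2)
  have : Fintype Q := Fintype.ofFinite Q
  let μ : Q → (K → Option Γ) → Q × (K → List Γ) := fun s d =>
    (⟨(micro M s.1 d).1, micro_mem M hL s.1 d s.2⟩, (micro M s.1 d).2)
  let π : Q × (K → List Γ) → (Option (TM2.Stmt (fun _ : K => Γ) Λ σ) × σ) × (K → List Γ) :=
    fun c => (c.1.1, c.2)
  have hπ : Function.Injective π := by
    rintro ⟨a, S⟩ ⟨b, S'⟩ h
    simp only [π, Prod.mk.injEq] at h
    exact Prod.ext (Subtype.ext h.1) h.2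
  have hsemi : Function.Semiconj π (step μ) (step (micro M)) := fun c => rfl
  have hmem : some (M l) ∈ TM2.stmts M L := by
    simp only [stmts, Finset.some_mem_insertNone, Finset.mem_biUnion]
    exact ⟨l, hl, stmts₁_self⟩
  let q₀ : Q := ⟨(some (M l), v), hmem⟩
  let h₀ : Q × (K → List Γ) := (⟨(none, w), by simp [stmts]⟩, T)
  have hh : step μ h₀ = h₀ := hπ ((hsemi h₀).trans (step_micro_none M w T))
  refine ⟨affineSystem μ, (Fintype.equivFin Q q₀ : ℕ), encode h₀, fun S => ?_⟩
  have henc : (fun i => i.elim ((Fintype.equivFin Q q₀ : ℕ) : ℤ) fun k => (code (S k) : ℤ)) =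
      encode (q₀, S) := by
    ext (_ | k) <;> rfl
  rw [henc, eqvGen_affineSystem_iff μ hh, ← exists_iterate_step_micro_eq_iff]
  refine exists_congr fun n => ?_
  rw [← hπ.eq_iff, (hsemi.iterate_right n).eq]
  rfl

end Simulation

end StackMachine

section

open Turing Turing.PartrecToTM2 StackMachine

instance : Fintype K' :=
  ⟨{.main, .rev, .aux, .stack}, fun k => by cases k <;> simp⟩

theorem Turing.PartrecToTM2.trNat_bit (b : Bool) (n : ℕ) (h : Nat.bit b n ≠ 0) :
    trNat (Nat.bit b n) = cond b Γ'.bit1 Γ'.bit0 :: trNat n := by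
  rw [trNat, trNat, ← Num.ofNat'_eq, ← Num.ofNat'_eq, Num.ofNat'_bit]
  cases b with
  | true => cases Num.ofNat' n <;> rfl
  | false =>
    rcases hm : Num.ofNat' n with _ | p
    · rw [Num.ofNat'_eq] at hm
      have : n = 0 := by
        have := congrArg (fun m : Num => (m : ℕ)) hm
        simpa using this
      simp [this] at h
    · rfl

theorem computable_code_trList :
    Computable fun n : ℕ => code (trList [n]) := by
  set e : ℕ → ℕ := fun n => code (trList [n]) with he
  let g : Unit → List ℕ → Option ℕ := fun _ l => some <| Nat.casesOn l.length (e 0) fun m =>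
    digit (some (cond (Nat.bodd (m + 1)) Γ'.bit1 Γ'.bit0)) + base Γ' * (l[(m + 1).div2]?.getD 0)
  have hg : Computable₂ g := by
    refine Primrec₂.to_comp (Primrec.option_some.comp (Primrec.nat_casesOn
      (Primrec.list_length.comp .snd) (Primrec.const (e 0)) ?_))
    refine Primrec.nat_add.comp (Primrec.dom_finite (fun b : Bool =>
      digit (some (cond b Γ'.bit1 Γ'.bit0))) |>.comp
        (Primrec.nat_bodd.comp (Primrec.succ.comp .snd))) (Primrec.nat_mul.comp (.const _) ?_)
    exact Primrec.option_getD.comp (Primrec.list_getElem?.comp (Primrec.snd.comp .fst)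
      (Primrec.nat_div2.comp (Primrec.succ.comp .snd))) (.const 0)
  have H : ∀ a n, g a ((List.range n).map e) = some (e n) := by
    intro _ n
    rcases n with _ | m
    · rfl
    have hlt : (m + 1).div2 < m + 1 := Nat.binaryRec_decreasing m.succ_ne_zero
    have hbit := Nat.bit_bodd_div2 (m + 1)
    have h1 : e (m + 1) =
        code (cond (m + 1).bodd Γ'.bit1 Γ'.bit0 :: trList [(m + 1).div2]) := by
      simp only [he, trList]
      conv_lhs => rw [← hbit]
      rw [trNat_bit _ _ (by rw [hbit]; exact m.succ_ne_zero)]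
      rfl
    simp only [g, h1, code, List.length_map, List.length_range, List.getElem?_map,
      List.getElem?_range hlt]
    rfl
  exact (Computable.nat_strong_rec (fun _ : Unit => e) hg H).comp (Computable.const ()) .id

end

/-- There is an affine system and a computable sequence of points on a line for which it is
undecidable which of them are connected to a given point. -/
theorem exists_affineSystem_not_computablePred :
    ∃ (I : Type) (_ : Fintype I) (_ : DecidableEq I) (A : AffineSystem I) (a b h : I → ℤ)
      (e : ℕ → ℕ), Computable e ∧
      ¬ ComputablePred fun n => Relation.EqvGen A.Step (a + (e n : ℤ) • b) h := by
  let g : ℕ →. ℕ := fun n => (Nat.Partrec.Code.eval (Denumerable.ofNat _ n) 0).map fun _ => 0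
  have hg : Partrec g :=
    (Nat.Partrec.Code.eval_part.comp (Computable.ofNat _) (Computable.const 0)).map
      (Computable.const 0).to₂
  obtain ⟨c, hc⟩ := Turing.ToPartrec.Code.exists_code (Nat.Partrec'.part_iff₁.2 hg)
  open Turing Turing.PartrecToTM2 StackMachine in
  obtain ⟨A, x, h, hA⟩ := @exists_affineSystem K' Γ' Λ' (Option Γ') _ tr _ _ ⟨trNormal c .halt⟩ _ _
    (tr_supports c .halt) (trNormal c .halt) (tr_supports c .halt).1 none none
    (K'.elim (trList [0]) [] [] [])
  refine ⟨Option K', inferInstance, inferInstance, A, fun i => i.elim x fun _ => 0,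
    Pi.single (some .main) 1, h, fun n => code (trList [n]), computable_code_trList, fun H => ?_⟩
  have hiff : ∀ n, Relation.EqvGen A.Step ((fun i => i.elim x fun _ => 0) +
      ((code (trList [n]) : ℕ) : ℤ) • Pi.single (some .main) 1) h ↔
        (Nat.Partrec.Code.eval (Denumerable.ofNat _ n) 0).Dom := by
    intro n
    have h1 : ((fun i => i.elim x fun _ => 0) +
      ((code (trList [n]) : ℕ) : ℤ) • Pi.single (some .main) 1 : Option K' → ℤ) =
        fun i => i.elim x fun k => (code (K'.elim (trList [n]) [] [] [] k) : ℤ) := by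
      ext (_ | k)
      · simp
      · cases k <;> simp [code, K'.elim]
    have h2 := hc ⟨[n], rfl⟩
    rw [h1, hA]
    refine Iff.trans (b := halt [0] ∈ halt <$> ToPartrec.Code.eval c [n]) ?_ ?_
    · rw [← tr_eval]
      rfl
    rw [h2]
    refine ⟨fun H => ?_, fun hd => ?_⟩
    · obtain ⟨_, H, _⟩ := (Part.mem_map_iff _).1 H
      obtain ⟨_, H, _⟩ := (Part.mem_map_iff _).1 H
      exact Part.dom_iff_mem.2 ⟨_, ((Part.mem_map_iff _).1 H).choose_spec.1⟩
    · obtain ⟨y, hy⟩ := Part.dom_iff_mem.1 hd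
      exact Part.mem_map _ (Part.mem_map _ (Part.mem_map (fun _ => 0) hy))
  refine ComputablePred.halting_problem 0 (ComputablePred.computable_of_manyOneReducible
    ⟨Encodable.encode, Computable.encode, fun c => ?_⟩ (H.of_eq hiff))
  rw [Denumerable.ofNat_encode]

open Function

/-- Simultaneous HNN extensions: homomorphisms with equal kernels become conjugate in a larger
group. -/
theorem exists_conj_of_ker_eq {G : Type} [Group G] {J : Type} [Finite J] {D : J → Type}
    [∀ j, Group (D j)] (a b : ∀ j, D j →* G) (hab : ∀ j, (a j).ker = (b j).ker) :
    ∃ (H : Type) (_ : Group H) (ι : G →* H) (s : J → H), Injective ι ∧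
      ∀ j d, s j * ι (a j d) * (s j)⁻¹ = ι (b j d) := by
  classical
  have key : ∀ S : Finset J, ∃ (H : Type) (_ : Group H) (ι : G →* H) (s : J → H), Injective ι ∧
      ∀ j ∈ S, ∀ d, s j * ι (a j d) * (s j)⁻¹ = ι (b j d) := by
    intro S
    induction S using Finset.induction_on with
    | empty => exact ⟨G, inferInstance, MonoidHom.id G, 1, injective_id, by simp⟩
    | insert j S hj ih =>
      obtain ⟨H, _, ι, s, hι, hs⟩ := ih
      have hker : (ι.comp (a j)).ker = (ι.comp (b j)).ker := by
        rw [MonoidHom.ker_comp_of_injective _ _ hι, MonoidHom.ker_comp_of_injective _ _ hι, hab]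
      let φ : (ι.comp (a j)).range ≃* (ι.comp (b j)).range :=
        (QuotientGroup.quotientKerEquivRange _).symm.trans
          ((QuotientGroup.quotientMulEquivOfEq hker).trans (QuotientGroup.quotientKerEquivRange _))
      have hφ : ∀ d, φ ⟨ι (a j d), d, rfl⟩ = ⟨ι (b j d), d, rfl⟩ := fun d => by
        have : (⟨ι (a j d), d, rfl⟩ : (ι.comp (a j)).range) =
          QuotientGroup.quotientKerEquivRange (ι.comp (a j)) (d : D j ⧸ (ι.comp (a j)).ker) := rfl
        simp only [φ, this, MulEquiv.trans_apply, MulEquiv.symm_apply_apply]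
        rfl
      refine ⟨HNNExtension H _ _ φ, inferInstance, HNNExtension.of.comp ι,
        Function.update (fun i => HNNExtension.of (s i)) j HNNExtension.t,
        (HNNExtension.of_injective φ).comp hι, fun i hi d => ?_⟩
      rcases Finset.mem_insert.1 hi with rfl | hi
      · have h := HNNExtension.equiv_eq_conj (φ := φ) ⟨ι (a i d), d, rfl⟩
        rw [hφ] at h
        simpa using h.symm
      · rw [Function.update_of_ne (ne_of_mem_of_not_mem hi hj)]
        simp only [MonoidHom.comp_apply, ← map_mul, ← map_inv, hs i hi]
  cases nonempty_fintype J
  obtain ⟨H, _, ι, s, hι, hs⟩ := key Finset.univ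
  exact ⟨H, inferInstance, ι, s, hι, fun j => hs j (Finset.mem_univ j)⟩

/-- Equivariance of a map between two actions of a free group can be checked on generators. -/
theorem FreeGroup.equivariant {X A B : Type*} (φ : FreeGroup X →* Equiv.Perm A)
    (ψ : FreeGroup X →* Equiv.Perm B) (F : A → B)
    (h : ∀ x a, F (φ (FreeGroup.of x) a) = ψ (FreeGroup.of x) (F a)) (w : FreeGroup X) (a : A) :
    F (φ w a) = ψ w (F a) := by
  induction w using FreeGroup.induction_on generalizing a with
  | C1 => simp
  | of x => exact h x a
  | inv_of x ih =>
    rw [_root_.map_inv, _root_.map_inv, Equiv.Perm.eq_inv_iff_eq, ← ih,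
      ← Equiv.Perm.mul_apply, mul_inv_cancel, Equiv.Perm.one_apply]
  | mul u v hu hv => rw [_root_.map_mul, _root_.map_mul, Equiv.Perm.mul_apply,
    Equiv.Perm.mul_apply, hu, hv]

section vecProd

variable {I G H : Type*} [Fintype I] [Group G] [Group H]

/-- The product of the powers `x i ^ v i`, in a fixed order. -/
noncomputable def vecProd (x : I → G) (v : I → ℤ) : G :=
  (Finset.univ.toList.map fun i => x i ^ v i).prod

theorem map_vecProd (f : G →* H) (x : I → G) (v : I → ℤ) :
    f (vecProd x v) = vecProd (fun i => f (x i)) v := by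
  simp [vecProd, map_list_prod, Function.comp_def]

theorem vecProd_mul (x : I → G) (m v : I → ℤ) :
    vecProd x (m * v) = vecProd (fun i => x i ^ m i) v := by
  simp [vecProd, zpow_mul]

theorem vecProd_conj (s : G) (x : I → G) (v : I → ℤ) :
    s * vecProd x v * s⁻¹ = vecProd (fun i => s * x i * s⁻¹) v :=
  map_vecProd (MulAut.conj s).toMonoidHom x v

theorem vecProd_zero (x : I → G) : vecProd x 0 = 1 := by
  simp [vecProd]

theorem vecProd_add {x : I → G} (hx : ∀ i j, Commute (x i) (x j)) (v w : I → ℤ) :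
    vecProd x (v + w) = vecProd x v * vecProd x w := by
  unfold vecProd
  induction (Finset.univ : Finset I).toList with
  | nil => simp
  | cons i l ih =>
    have hc : Commute (x i ^ w i) (l.map fun j => x j ^ v j).prod :=
      Commute.list_prod_right _ _ fun y hy => by
        obtain ⟨j, _, rfl⟩ := List.mem_map.1 hy
        exact ((hx i j).zpow_zpow _ _)
    rw [List.map_cons, List.prod_cons, ih, Pi.add_apply, zpow_add, List.map_cons, List.prod_cons,
      List.map_cons, List.prod_cons]
    rw [mul_assoc, mul_assoc, ← mul_assoc (x i ^ w i), hc.eq, mul_assoc]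

theorem vecProd_add_nsmul {x : I → G} (hx : ∀ i j, Commute (x i) (x j)) (v w : I → ℤ) (n : ℕ) :
    vecProd x (v + (n : ℤ) • w) = vecProd x v * vecProd x w ^ n := by
  rw [vecProd_add hx]
  congr 1
  induction n with
  | zero => simp [vecProd_zero]
  | succ n ih => rw [pow_succ, ← ih, ← vecProd_add hx]; push_cast; rw [add_smul, one_smul]

variable [DecidableEq I]

/-- Translations of the first factor. -/
def shift {I : Type*} (Z : Type*) : Multiplicative (I → ℤ) →* Equiv.Perm ((I → ℤ) × Z) where
  toFun v := (Equiv.addRight v.toAdd).prodCongr (Equiv.refl Z)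
  map_one' := by ext <;> simp
  map_mul' v w := by ext <;> simp [add_comm, add_left_comm]

theorem shift_apply {I Z : Type*} (v u : I → ℤ) (z : Z) :
    shift Z (.ofAdd v) (u, z) = (u + v, z) := rfl

theorem vecProd_shift (Z : Type*) (v : I → ℤ) :
    vecProd (fun i => shift Z (.ofAdd (Pi.single i 1))) v = shift Z (.ofAdd v) := by
  rw [← map_vecProd]
  congr 1
  rw [vecProd, Finset.prod_map_toList]
  simp only [← ofAdd_zsmul, ← ofAdd_sum]
  congr 1
  conv_rhs => rw [← Finset.univ_sum_single v]
  refine Finset.sum_congr rfl fun i _ => ?_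
  rw [← Pi.single_smul]; simp

end vecProd

/-- The symbols on which the rules of an affine system act. -/
inductive BaseSymbol (I : Type)
  | x (i : I)
  | t
  | k

namespace BaseSymbol

open FreeGroup (of)

variable {I : Type} [DecidableEq I]

/-- Translations act on rational-valued lines over `I → ℤ`, the symbol `t` acts by addition over the
origin and `k` by doubling outside `C`. -/
noncomputable def lineRep (C : Set (I → ℤ)) :
    FreeGroup (BaseSymbol I) →* Equiv.Perm ((I → ℤ) × ℚ) :=
  open scoped Classical in
  FreeGroup.lift fun
    | x i => shift ℚ (.ofAdd (Pi.single i 1))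
    | t => (Equiv.refl _).prodShear fun u => if u = 0 then Equiv.addRight 1 else Equiv.refl ℚ
    | k => (Equiv.refl _).prodShear fun u =>
        if u ∈ C then Equiv.refl ℚ else Equiv.mulRight₀ 2 two_ne_zero

/-- The lamplighter action, in which `t` acts trivially and `k` turns the lamp at the current
position. -/
noncomputable def lampRep :
    FreeGroup (BaseSymbol I) →* Equiv.Perm ((I → ℤ) × ((I → ℤ) →₀ ℤ)) :=
  FreeGroup.lift fun
    | x i => shift _ (.ofAdd (Pi.single i 1))
    | t => 1
    | k => (Equiv.refl _).prodShear fun u => Equiv.addRight (Finsupp.single u 1)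

theorem lampRep_x (i : I) : lampRep (of (x i)) = shift _ (.ofAdd (Pi.single i 1)) := by
  simp [lampRep]

theorem lampRep_t : lampRep (of (t : BaseSymbol I)) = 1 := by
  simp [lampRep]

theorem lampRep_k (u : I → ℤ) (f : (I → ℤ) →₀ ℤ) :
    lampRep (of k) (u, f) = (u, f + Finsupp.single u 1) := by
  simp [lampRep]

theorem shift_single_zpow (Z : Type*) (i : I) (n : ℤ) (u : I → ℤ) (z : Z) :
    (shift Z (.ofAdd (Pi.single i 1)) ^ n) (u, z) = (u + Pi.single i n, z) := by
  rw [← map_zpow, ← ofAdd_zsmul, shift_apply, ← Pi.single_smul]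
  simp

theorem mul_add_single (m u : I → ℤ) (i : I) :
    m * (u + Pi.single i 1) = m * u + Pi.single i (m i) := by
  rw [mul_add, ← Pi.single_mul_right, mul_one]

variable (C : Set (I → ℤ))

theorem lineRep_x (i : I) : lineRep C (of (x i)) = shift ℚ (.ofAdd (Pi.single i 1)) := by
  simp [lineRep]

open scoped Classical in
theorem lineRep_k (u : I → ℤ) (q : ℚ) :
    lineRep C (of k) (u, q) = (u, if u ∈ C then q else q * 2) := by
  simp only [lineRep, FreeGroup.lift_apply_of, Equiv.prodShear_apply, Equiv.refl_apply]
  split_ifs <;> rfl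

variable [Fintype I]

/-- The endomorphism that rescales the translations by `m` and moves `t` to `v`. -/
noncomputable def rescale (m v : I → ℤ) : FreeGroup (BaseSymbol I) →* FreeGroup (BaseSymbol I) :=
  FreeGroup.lift fun
    | x i => of (x i) ^ m i
    | t => vecProd (fun i => of (x i)) v * of t * (vecProd (fun i => of (x i)) v)⁻¹
    | k => of k

theorem lineRep_t_conj (v u : I → ℤ) (q : ℚ) :
    lineRep C (vecProd (fun i => of (x i)) v * of t * (vecProd (fun i => of (x i)) v)⁻¹) (u, q) =
      (u, if u = v then q + 1 else q) := by
  rw [map_mul, map_mul, map_inv, map_vecProd]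
  simp only [lineRep_x, vecProd_shift]
  rw [← map_inv, ← ofAdd_neg]
  simp only [Equiv.Perm.mul_apply, shift_apply, lineRep, FreeGroup.lift_apply_of,
    Equiv.prodShear_apply, Equiv.refl_apply, ← sub_eq_add_neg, sub_eq_zero, sub_add_cancel]
  split_ifs <;> rfl

theorem lineRep_t (u : I → ℤ) (q : ℚ) :
    lineRep C (of t) (u, q) = (u, if u = 0 then q + 1 else q) := by
  have := lineRep_t_conj C 0 u q
  simpa [vecProd_zero] using this

variable {m v : I → ℤ}

theorem lineRep_rescale (w : FreeGroup (BaseSymbol I)) (hm : ∀ i, m i ≠ 0) (u : I → ℤ) (q : ℚ) :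
    lineRep C (rescale m v w) (m * u + v, q) =
      (m * (lineRep {u | m * u + v ∈ C} w (u, q)).1 + v,
        (lineRep {u | m * u + v ∈ C} w (u, q)).2) := by
  refine (FreeGroup.equivariant (lineRep {u | m * u + v ∈ C}) ((lineRep C).comp (rescale m v))
    (fun z => (m * z.1 + v, z.2)) ?_ w (u, q)).symm
  rintro (i | _ | _) ⟨u, q⟩
  · simp only [lineRep_x, shift_apply, MonoidHom.comp_apply, rescale, FreeGroup.lift_apply_of,
      map_zpow, shift_single_zpow, mul_add_single, add_right_comm]
  · have hu : m * u = 0 ↔ u = 0 := by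
      simp [funext_iff, hm]
    simp only [MonoidHom.comp_apply, rescale, FreeGroup.lift_apply_of, lineRep_t_conj, lineRep_t,
      add_eq_right, hu]
  · simp only [MonoidHom.comp_apply, rescale, FreeGroup.lift_apply_of, lineRep_k]
    rfl

theorem lampRep_rescale (w : FreeGroup (BaseSymbol I)) (a u : I → ℤ) (f g : (I → ℤ) →₀ ℤ) :
    lampRep (rescale m v w) (a + m * u, g + f.mapDomain (fun z => a + m * z)) =
      (a + m * (lampRep w (u, f)).1,
        g + (lampRep w (u, f)).2.mapDomain (fun z => a + m * z)) := by
  refine (FreeGroup.equivariant lampRep (lampRep.comp (rescale m v))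
    (fun z => (a + m * z.1, g + z.2.mapDomain (fun z => a + m * z))) ?_ w (u, f)).symm
  rintro (i | _ | _) ⟨u, f⟩
  · simp only [lampRep_x, shift_apply, MonoidHom.comp_apply, rescale, FreeGroup.lift_apply_of,
      map_zpow, shift_single_zpow, mul_add_single, add_assoc]
  · simp [rescale, lampRep_t]
  · simp only [MonoidHom.comp_apply, rescale, FreeGroup.lift_apply_of, lampRep_k,
      Finsupp.mapDomain_add, Finsupp.mapDomain_single, add_assoc]

open scoped Classical in
theorem lineRep_rescale_of_notMem_range (w : FreeGroup (BaseSymbol I)) {a : I → ℤ}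
    (ha : ∀ u, a + m * u ≠ v) (q : ℚ) :
    lineRep C (rescale m v w) (a, q) =
      (a + m * (lampRep w (0, 0)).1,
        q * 2 ^ ((lampRep w (0, 0)).2.sum fun z n => if a + m * z ∈ C then 0 else n)) := by
  have := (FreeGroup.equivariant lampRep ((lineRep C).comp (rescale m v))
    (fun z => (a + m * z.1, q * 2 ^ (z.2.sum fun z n => if a + m * z ∈ C then 0 else n)))
    ?_ w (0, 0)).symm
  · simpa using this
  rintro (i | _ | _) ⟨u, f⟩
  · simp only [lampRep_x, lineRep_x, shift_apply, MonoidHom.comp_apply, rescale,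
      FreeGroup.lift_apply_of, map_zpow, shift_single_zpow, mul_add_single, add_assoc]
  · simp only [MonoidHom.comp_apply, rescale, FreeGroup.lift_apply_of, lineRep_t_conj, lampRep_t,
      if_neg (ha u), Equiv.Perm.one_apply]
  · simp only [MonoidHom.comp_apply, rescale, FreeGroup.lift_apply_of, lineRep_k, lampRep_k]
    rw [Finsupp.sum_add_index' (by simp) (by intro z n n'; split_ifs <;> simp),
      Finsupp.sum_single_index (by simp), zpow_add₀ two_ne_zero, ← mul_assoc]
    split_ifs <;> simp

/-- The kernel of a rescaled representation only depends on the pullback of `C`. -/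
theorem ker_rescale (hm : ∀ i, m i ≠ 0) :
    (((lineRep C).prod lampRep).comp (rescale m v)).ker =
      ((lineRep {u | m * u + v ∈ C}).prod lampRep).ker := by
  ext w
  simp only [MonoidHom.mem_ker, MonoidHom.comp_apply, MonoidHom.prod_apply, Prod.mk_eq_one]
  have hinj : Injective fun u : I → ℤ => m * u := fun a b h => funext fun i =>
    mul_left_cancel₀ (hm i) (congrFun h i)
  constructor
  · rintro ⟨h1, h2⟩
    constructor
    · ext1 ⟨u, q⟩
      have h := lineRep_rescale (v := v) C w hm u q
      rw [h1] at h
      simp only [Equiv.Perm.one_apply, Prod.mk.injEq, add_left_inj] at h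
      exact Prod.ext (hinj h.1).symm h.2.symm
    · ext1 ⟨u, f⟩
      have h := lampRep_rescale (m := m) (v := v) w 0 u f 0
      rw [h2] at h
      simp only [Equiv.Perm.one_apply, Prod.mk.injEq, zero_add] at h
      exact Prod.ext (hinj h.1).symm (Finsupp.mapDomain_injective hinj h.2).symm
  · rintro ⟨h1, h2⟩
    constructor
    · ext1 ⟨a, q⟩
      by_cases ha : ∃ u, m * u + v = a
      · obtain ⟨u, rfl⟩ := ha
        rw [lineRep_rescale C w hm, h1]
        simp
      · rw [lineRep_rescale_of_notMem_range C w, h2]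
        · simp
        · intro u hu
          exact ha ⟨-u, by rw [← hu]; ring⟩
    · ext1 ⟨a, g⟩
      have h := lampRep_rescale (m := m) (v := v) w a 0 0 g
      rw [h2] at h
      simpa using h

end BaseSymbol

/-- The generators of the group of an affine system. -/
inductive AffineSystem.Gen {I : Type} (A : AffineSystem I)
  | x (i : I)
  | t
  | k
  | e
  | d (b : Bool)
  | rule (r : A.Rule)
  | y (i : I)
  | z
  | p

namespace AffineSystem

open FreeGroup (of)

variable {I : Type} [Fintype I]

/-- The conjugate of `t` by the translation by `v`. -/
noncomputable def conjT {G : Type*} [Group G] (x : I → G) (t : G) (v : I → ℤ) : G :=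
  vecProd x v * t * (vecProd x v)⁻¹

theorem map_conjT {G H : Type*} [Group G] [Group H] (f : G →* H) (x : I → G) (t : G)
    (v : I → ℤ) : f (conjT x t v) = conjT (fun i => f (x i)) (f t) v := by
  simp [conjT, map_vecProd]

theorem conjT_add {G : Type*} [Group G] {x : I → G} (hx : ∀ i j, Commute (x i) (x j)) (t : G)
    (u v : I → ℤ) : conjT x t (u + v) = vecProd x u * conjT x t v * (vecProd x u)⁻¹ := by
  simp only [conjT, vecProd_add hx]
  group

variable (A : AffineSystem I)

open Gen

/-- The relator that equates `g` and `h`. -/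
def relator {G : Type*} [Group G] (g h : G) : G := g * h⁻¹

theorem map_relator_eq_one_iff {G H : Type*} [Group G] [Group H] (f : G →* H) (g h : G) :
    f (relator g h) = 1 ↔ f g = f h := by
  rw [relator, map_mul, map_inv, mul_inv_eq_one]

/-- The relators of the group of an affine system with distinguished point `h`. -/
inductive FixedRel (h : I → ℤ) : FreeGroup A.Gen → Prop
  | comm (i j) : FixedRel h (relator (of (x i) * of (x j)) (of (x j) * of (x i)))
  | rule_t (r : A.Rule) : FixedRel h (relator
      (of (rule r) * conjT (fun i => of (x i)) (of t) (A.srcOff r) * (of (rule r))⁻¹)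
      (conjT (fun i => of (x i)) (of t) (A.tgtOff r)))
  | rule_x (r : A.Rule) (i) : FixedRel h (relator
      (of (rule r) * of (x i) ^ A.srcMul r i * (of (rule r))⁻¹) (of (x i) ^ A.tgtMul r i))
  | rule_k (r : A.Rule) : FixedRel h (relator (of (rule r) * of k * (of (rule r))⁻¹) (of k))
  | k_comm : FixedRel h (relator (of k * conjT (fun i => of (x i)) (of t) h)
      (conjT (fun i => of (x i)) (of t) h * of k))
  | y (i) : FixedRel h (relator (of (y i) * of t * (of (y i))⁻¹) (of (x i)))
  | z : FixedRel h (relator (of z * of t * (of z)⁻¹) (of k))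
  | p : FixedRel h (relator (of p * of t * (of p)⁻¹) (of t * of e))
  | e : FixedRel h (of e ^ 2)
  | d (b) : FixedRel h (of (d b))

/-- The relator that forces `k` to act on the conjugate of `t` by `v` by squaring. -/
def squareRel (v : FreeGroup A.Gen) : FreeGroup A.Gen :=
  of k * (v * of t * v⁻¹) * (of k)⁻¹ * (v * of t ^ 2 * v⁻¹)⁻¹

/-- The generators that vanish in the collapsed group. -/
def IsBase : A.Gen → Prop
  | x _ | t | k | e | d _ => True
  | _ => False

/-- The relators of the collapsed group. -/
def baseRels : Set (FreeGroup A.Gen) := of '' {s | A.IsBase s}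

/-- The translation by `a + n • b`. -/
noncomputable def lineWord (a b : I → ℤ) (n : ℕ) : FreeGroup A.Gen :=
  vecProd (fun i => of (x i)) a * vecProd (fun i => of (x i)) b ^ n

/-- The relators of the group attached to the point `a + n • b`. -/
def rels (a b h : I → ℤ) (n : ℕ) : Set (FreeGroup A.Gen) :=
  {w | A.FixedRel h w} ∪ {A.squareRel (A.lineWord a b n)}

end AffineSystem

namespace AffineSystem

open FreeGroup (of)

open Gen

variable {I : Type} (A : AffineSystem I)

/-- The collapsed group has no involutions. -/
theorem mem_normalClosure_baseRels_of_sq_mem (g : FreeGroup A.Gen)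
    (hg : g ^ 2 ∈ Subgroup.normalClosure A.baseRels) : g ∈ Subgroup.normalClosure A.baseRels := by
  let θ : FreeGroup A.Gen →* FreeGroup A.Gen := FreeGroup.lift fun
    | rule r => of (rule r)
    | y i => of (y i)
    | z => of z
    | p => of p
    | _ => 1
  let π := QuotientGroup.mk' (Subgroup.normalClosure A.baseRels)
  have h1 : Subgroup.normalClosure A.baseRels ≤ θ.ker := by
    refine Subgroup.normalClosure_le_normal ?_
    rintro _ ⟨s, hs, rfl⟩
    cases s <;> first | exact FreeGroup.lift_apply_of | exact hs.elim
  have hbase : ∀ s, A.IsBase s → π (of s) = 1 := fun s hs =>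
    (QuotientGroup.eq_one_iff _).2 (Subgroup.subset_normalClosure ⟨s, hs, rfl⟩)
  have h2 : π.comp θ = π := by
    ext s
    cases s <;> simp only [θ, MonoidHom.comp_apply, FreeGroup.lift_apply_of, map_one] <;>
      exact (hbase _ (by trivial)).symm
  have h3 : θ g ^ 2 = 1 := by rw [← map_pow]; exact h1 hg
  have h4 : θ g = 1 := by
    simpa using h3
  have h5 := DFunLike.congr_fun h2 g
  rw [MonoidHom.comp_apply, h4, map_one] at h5
  exact (QuotientGroup.eq_one_iff _).1 h5.symm

variable [Fintype I] {a b h : I → ℤ} {n : ℕ}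

theorem commute_conjT_iff {G : Type*} [Group G] {x : I → G} (hx : ∀ i j, Commute (x i) (x j))
    {t k : G} {s : A.Rule → G}
    (hst : ∀ r, s r * conjT x t (A.srcOff r) * (s r)⁻¹ = conjT x t (A.tgtOff r))
    (hsx : ∀ r i, s r * x i ^ A.srcMul r i * (s r)⁻¹ = x i ^ A.tgtMul r i)
    (hsk : ∀ r, s r * k * (s r)⁻¹ = k) {v w : I → ℤ} (hvw : Relation.EqvGen A.Step v w) :
    Commute k (conjT x t v) ↔ Commute k (conjT x t w) := by
  induction hvw with
  | rel v w hvw =>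
    obtain ⟨r, u, rfl, rfl⟩ := hvw
    have h1 : s r * conjT x t (A.srcMul r * u + A.srcOff r) * (s r)⁻¹ =
        conjT x t (A.tgtMul r * u + A.tgtOff r) := by
      rw [conjT_add hx, conjT_add hx, ← hst, vecProd_mul, vecProd_mul, ← funext (hsx r),
        ← vecProd_conj]
      group
    rw [← h1]
    conv_rhs => rw [← hsk r, Commute.conj_iff]
  | refl => rfl
  | symm _ _ _ ih => exact ih.symm
  | trans _ _ _ _ _ ih₁ ih₂ => exact ih₁.trans ih₂

/-- If the point `a + n • b` is connected to `h`, then the group collapses to a free group. -/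
theorem normalClosure_rels_eq (H : Relation.EqvGen A.Step (a + (n : ℤ) • b) h) :
    Subgroup.normalClosure (A.rels a b h n) = Subgroup.normalClosure A.baseRels := by
  apply le_antisymm
  · refine Subgroup.normalClosure_le_normal fun w hw => ?_
    let π := QuotientGroup.mk' (Subgroup.normalClosure A.baseRels)
    suffices hπ : π w = 1 from (QuotientGroup.eq_one_iff _).1 hπ
    have hbase : ∀ s, A.IsBase s → π (of s) = 1 := fun s hs =>
      (QuotientGroup.eq_one_iff _).2 (Subgroup.subset_normalClosure ⟨s, hs, rfl⟩)
    have hx : ∀ i, π (of (x i)) = 1 := fun i => hbase _ trivial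
    have ht : π (of t) = 1 := hbase _ trivial
    have hk : π (of k) = 1 := hbase _ trivial
    have he : π (of e) = 1 := hbase _ trivial
    have hd : ∀ b, π (of (d b)) = 1 := fun b => hbase _ trivial
    rcases hw with hw | rfl
    · cases hw <;> simp only [map_relator_eq_one_iff, map_conjT, map_mul, map_inv, map_zpow,
        map_pow, hx, ht, hk, he, hd] <;> simp [conjT]
    · simp [squareRel, ht, hk]
  · set N := Subgroup.normalClosure (A.rels a b h n)
    let π := QuotientGroup.mk' N
    have hrel : ∀ g, A.FixedRel h g → π g = 1 := fun g hg =>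
      (QuotientGroup.eq_one_iff _).2 (Subgroup.subset_normalClosure (Or.inl hg))
    have hx : ∀ i j, Commute (π (of (x i))) (π (of (x j))) := fun i j => by
      simpa [map_relator_eq_one_iff] using! hrel _ (.comm i j)
    have hst := fun r => hrel _ (.rule_t r)
    have hsx := fun r i => hrel _ (.rule_x r i)
    have hsk := fun r => hrel _ (.rule_k r)
    have hk := hrel _ .k_comm
    have hy := fun i => hrel _ (.y i)
    have hz := hrel _ .z
    have hp := hrel _ .p
    simp only [map_relator_eq_one_iff, map_mul, map_inv, map_conjT, map_zpow] at hst hsx hsk hk hy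
    simp only [map_relator_eq_one_iff, map_mul, map_inv] at hz hp
    have hcomm := (A.commute_conjT_iff hx hst hsx hsk H).2 hk
    have hsq : π (A.squareRel (A.lineWord a b n)) = 1 :=
      (QuotientGroup.eq_one_iff _).2 (Subgroup.subset_normalClosure (Or.inr rfl))
    have hline : π (A.lineWord a b n) =
        vecProd (fun i => π (of (x i))) (a + (n : ℤ) • b) := by
      rw [vecProd_add_nsmul hx, lineWord, map_mul, map_pow, map_vecProd, map_vecProd]
    have ht : π (of t) = 1 := by
      simp only [squareRel, map_mul, map_inv, hline, map_pow] at hsq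
      change π (of k) * conjT _ _ _ * _ * _ = 1 at hsq
      rw [hcomm.eq, mul_inv_cancel_right, conjT, mul_inv_eq_one, mul_left_inj, mul_right_inj,
        sq] at hsq
      exact (mul_eq_left.1 hsq.symm)
    have hx1 : ∀ i, π (of (x i)) = 1 := fun i => by simpa [ht] using (hy i).symm
    have hk1 : π (of k) = 1 := by simpa [ht] using hz.symm
    have he1 : π (of e) = 1 := by simpa [ht] using hp.symm
    refine Subgroup.normalClosure_le_normal fun w hw => ?_
    suffices hπ : π w = 1 from (QuotientGroup.eq_one_iff _).1 hπ
    obtain ⟨s, hs, rfl⟩ := hw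
    cases s with
    | x i => exact hx1 i
    | t => exact ht
    | k => exact hk1
    | e => exact he1
    | d b => exact hrel _ (.d b)
    | _ => exact hs.elim

end AffineSystem

theorem ker_zpowersHom_eq_bot {G : Type*} [Group G] {g : G} (hg : ¬ IsOfFinOrder g) :
    (zpowersHom G g).ker = ⊥ :=
  (MonoidHom.ker_eq_bot_iff _).2 fun _ _ h =>
    Multiplicative.toAdd.injective (injective_zpow_iff_not_isOfFinOrder.2 hg h)

namespace AffineSystem

open FreeGroup (of)

variable {I : Type}

section BaseModel

open BaseSymbol

/-- The base group of the model in which the symbols act both on lines and on lamps. -/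
abbrev BaseModel (I : Type) : Type :=
  Equiv.Perm ((I → ℤ) × ℚ) × Equiv.Perm ((I → ℤ) × ((I → ℤ) →₀ ℤ))

/-- The involution that negates the lamps. -/
noncomputable def negLamps (I : Type) : BaseModel I :=
  (1, (Equiv.refl _).prodCongr (Equiv.neg _))

theorem negLamps_sq : negLamps I ^ 2 = 1 := by
  refine Prod.ext (one_pow 2) ?_
  refine Equiv.ext fun ⟨u, f⟩ => ?_
  simp [negLamps, sq]

theorem negLamps_ne_one : negLamps I ≠ 1 := by
  intro H
  have h1 := congrArg (fun g : BaseModel I => g.2 (0, Finsupp.single 0 1)) H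
  simp [negLamps, ← Finsupp.single_neg] at h1
  have h2 := DFunLike.congr_fun h1 0
  simp at h2

variable [DecidableEq I] (C : Set (I → ℤ))

/-- The representation of the symbols in the base group. -/
noncomputable def baseRep : FreeGroup (BaseSymbol I) →* BaseModel I :=
  (lineRep C).prod lampRep

theorem baseRep_commute_x (i j : I) : Commute (baseRep C (of (x i))) (baseRep C (of (x j))) :=
  Prod.commute_iff.2 ⟨by
    simp only [baseRep, MonoidHom.prod_apply, lineRep_x]
    exact (Commute.all _ _).map _, by
    simp only [baseRep, MonoidHom.prod_apply, lampRep_x]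
    exact (Commute.all _ _).map _⟩

theorem not_isOfFinOrder_baseRep_x (i : I) : ¬ IsOfFinOrder (baseRep C (of (x i))) := by
  rw [isOfFinOrder_iff_pow_eq_one]
  rintro ⟨n, hn, H⟩
  have h1 : shift ℚ (.ofAdd (Pi.single i 1)) ^ (n : ℤ) = 1 := by
    simpa [baseRep, lineRep_x] using congrArg Prod.fst H
  have h2 := shift_single_zpow ℚ i n 0 0
  rw [h1] at h2
  have h3 := congrFun (congrArg Prod.fst h2) i
  simp at h3
  omega

theorem not_isOfFinOrder_baseRep_k : ¬ IsOfFinOrder (baseRep C (of k)) := by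
  rw [isOfFinOrder_iff_pow_eq_one]
  rintro ⟨n, hn, H⟩
  have h1 : (lampRep (of (k : BaseSymbol I))) ^ n = 1 := by
    simpa [baseRep] using congrArg Prod.snd H
  have h2 : ∀ n : ℕ, ((lampRep (of (k : BaseSymbol I))) ^ n) (0, 0) =
      (0, Finsupp.single 0 (n : ℤ)) :=
    fun n => by
      induction n with
      | zero => simp
      | succ n ih =>
        rw [pow_succ', Equiv.Perm.mul_apply, ih, lampRep_k, ← Finsupp.single_add]; simp
  have h3 := DFunLike.congr_fun (congrArg Prod.snd (h2 n)) 0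
  rw [h1] at h3
  simp at h3
  omega

variable [Fintype I]

theorem lampRep_conjT (v : I → ℤ) :
    lampRep (conjT (fun i => of (x i)) (of t) v : FreeGroup (BaseSymbol I)) = 1 := by
  simp [conjT, lampRep_t]

theorem baseRep_commute_k {v : I → ℤ} (hv : v ∈ C) :
    Commute (baseRep C (of k)) (baseRep C (conjT (fun i => of (x i)) (of t) v)) := by
  refine Prod.commute_iff.2 ⟨?_, ?_⟩
  · simp only [baseRep, MonoidHom.prod_apply]
    refine Equiv.ext fun ⟨u, q⟩ => ?_
    simp only [Equiv.Perm.mul_apply, lineRep_k, conjT, lineRep_t_conj]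
    split_ifs <;> simp_all
  · simp [baseRep, lampRep_conjT]

theorem baseRep_conj_k {v : I → ℤ} (hv : v ∉ C) :
    baseRep C (of k) * baseRep C (conjT (fun i => of (x i)) (of t) v) * (baseRep C (of k))⁻¹ =
      baseRep C (conjT (fun i => of (x i)) (of t) v) ^ 2 := by
  rw [mul_inv_eq_iff_eq_mul]
  refine Prod.ext ?_ ?_
  · simp only [baseRep, MonoidHom.prod_apply, Prod.fst_mul, sq]
    refine Equiv.ext fun ⟨u, q⟩ => ?_
    simp only [Equiv.Perm.mul_apply, lineRep_k, conjT, lineRep_t_conj]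
    by_cases huv : u = v
    · subst huv
      simp only [if_true, if_neg hv, Prod.mk.injEq, true_and]
      ring
    · simp [huv]
  · simp [baseRep, lampRep_conjT]

theorem not_isOfFinOrder_baseRep_t_mul {g : BaseModel I} (hg : g.1 = 1) :
    ¬ IsOfFinOrder (baseRep C (of t) * g) := by
  rw [isOfFinOrder_iff_pow_eq_one]
  rintro ⟨n, hn, H⟩
  have h1 : lineRep C (of t) ^ n = 1 := by
    simpa [baseRep, hg] using congrArg Prod.fst H
  have h2 : ∀ n : ℕ, (lineRep C (of t) ^ n) (0, 0) = (0, (n : ℚ)) := fun n => by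
    induction n with
    | zero => simp
    | succ n ih => rw [pow_succ', Equiv.Perm.mul_apply, ih, lineRep_t]; simp
  have h3 := h2 n
  rw [h1] at h3
  simp only [Equiv.Perm.one_apply, Prod.mk.injEq, true_and] at h3
  exact hn.ne (by exact_mod_cast h3)

end BaseModel

variable [Fintype I] [DecidableEq I] (A : AffineSystem I)

open Gen

/-- If `C` is invariant under the rules, then there is a model in which `k` acts on the conjugates
of `t` by points outside of `C` by squaring, and in which the involution survives. -/
theorem exists_model {C : Set (I → ℤ)} {h : I → ℤ} (hh : h ∈ C)
    (hC : ∀ v w, A.Step v w → (v ∈ C ↔ w ∈ C)) :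
    ∃ (H : Type) (_ : Group H) (φ : FreeGroup A.Gen →* H), (∀ w, A.FixedRel h w → φ w = 1) ∧
      φ (of e) ≠ 1 ∧ ∀ v ∉ C, φ (of k) * φ (conjT (fun i => of (x i)) (of t) v) * (φ (of k))⁻¹ =
        φ (conjT (fun i => of (x i)) (of t) v) ^ 2 := by
  have := A.finite_rule
  have hker : ∀ r, ((baseRep C).comp (BaseSymbol.rescale (A.srcMul r) (A.srcOff r))).ker =
      ((baseRep C).comp (BaseSymbol.rescale (A.tgtMul r) (A.tgtOff r))).ker := fun r => by
    rw [baseRep, BaseSymbol.ker_rescale _ (A.srcMul_ne_zero r),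
      BaseSymbol.ker_rescale _ (A.tgtMul_ne_zero r)]
    congr 3
    ext u
    exact hC _ _ ⟨r, u, rfl, rfl⟩
  obtain ⟨H₁, _, ι₁, s, hι₁, hs⟩ := exists_conj_of_ker_eq _ _ hker
  set ρ := ι₁.comp (baseRep C) with hρ
  let target : Option (Option I) → H₁
    | none => ι₁ (baseRep C (of .t) * negLamps I)
    | some none => ρ (of .k)
    | some (some i) => ρ (of (.x i))
  have htarget : ∀ j, (zpowersHom H₁ (ρ (of .t))).ker = (zpowersHom H₁ (target j)).ker := by
    intro j
    rw [ker_zpowersHom_eq_bot, ker_zpowersHom_eq_bot]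
    · rcases j with _ | _ | i <;> simp only [target, hρ, MonoidHom.comp_apply, hι₁.isOfFinOrder_iff]
      exacts [not_isOfFinOrder_baseRep_t_mul C rfl, not_isOfFinOrder_baseRep_k C,
        not_isOfFinOrder_baseRep_x C i]
    · simp only [hρ, MonoidHom.comp_apply, hι₁.isOfFinOrder_iff]
      simpa using not_isOfFinOrder_baseRep_t_mul C (g := 1) rfl
  obtain ⟨H₂, _, ι₂, c, hι₂, hc⟩ := exists_conj_of_ker_eq _ _ htarget
  have hc' : ∀ j, c j * ι₂ (ρ (of .t)) * (c j)⁻¹ = ι₂ (target j) := fun j => by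
    simpa using hc j (.ofAdd 1)
  let φ : FreeGroup A.Gen →* H₂ := FreeGroup.lift fun
    | x i => ι₂ (ρ (of (.x i)))
    | t => ι₂ (ρ (of .t))
    | k => ι₂ (ρ (of .k))
    | e => ι₂ (ι₁ (negLamps I))
    | d _ => 1
    | rule r => ι₂ (s r)
    | y i => c (some (some i))
    | z => c (some none)
    | p => c none
  have hφT : ∀ v, φ (conjT (fun i => of (x i)) (of t) v) =
      ι₂ (ρ (conjT (fun i => of (.x i)) (of .t) v)) := fun v => by
    simp only [map_conjT]
    simp [φ]
  refine ⟨H₂, inferInstance, φ, fun w hw => ?_, ?_, fun v hv => ?_⟩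
  · cases hw with
    | comm i j =>
      rw [map_relator_eq_one_iff]
      simpa [φ, hρ] using (((baseRep_commute_x C i j).map ι₁).map ι₂).eq
    | rule_t r =>
      rw [map_relator_eq_one_iff, map_mul, map_mul, map_inv, hφT, hφT]
      have h1 := congrArg ι₂ (hs r (of .t))
      simpa [φ, hρ, BaseSymbol.rescale, conjT] using h1
    | rule_x r i =>
      rw [map_relator_eq_one_iff]
      have h1 := congrArg ι₂ (hs r (of (.x i)))
      simpa [φ, hρ, BaseSymbol.rescale] using h1
    | rule_k r =>
      rw [map_relator_eq_one_iff]
      have h1 := congrArg ι₂ (hs r (of .k))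
      simpa [φ, hρ, BaseSymbol.rescale] using h1
    | k_comm =>
      rw [map_relator_eq_one_iff, map_mul, map_mul, hφT]
      simpa [φ, hρ] using (((baseRep_commute_k C hh).map ι₁).map ι₂).eq
    | y i =>
      rw [map_relator_eq_one_iff]
      simpa [φ] using hc' (some (some i))
    | z =>
      rw [map_relator_eq_one_iff]
      simpa [φ] using hc' (some none)
    | p =>
      rw [map_relator_eq_one_iff]
      simpa [φ, hρ, target] using hc' none
    | e =>
      rw [map_pow]
      simp [φ, ← map_pow, negLamps_sq]
    | d b => simp [φ]
  · have h1 : φ (of e) = ι₂ (ι₁ (negLamps I)) := by simp [φ]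
    rw [h1, Ne, map_eq_one_iff _ hι₂, map_eq_one_iff _ hι₁]
    exact negLamps_ne_one
  · rw [hφT]
    have h1 := congrArg (fun g => ι₂ (ι₁ g)) (baseRep_conj_k C hv)
    simpa [φ, hρ] using h1

/-- If the point `a + n • b` is not connected to `h`, then the involution survives. -/
theorem of_e_notMem_normalClosure_rels {a b h : I → ℤ} {n : ℕ}
    (H : ¬ Relation.EqvGen A.Step (a + (n : ℤ) • b) h) :
    of e ∉ Subgroup.normalClosure (A.rels a b h n) := by
  obtain ⟨G, _, φ, hφ, hφe, hφk⟩ := A.exists_model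
    (C := {v | Relation.EqvGen A.Step v h}) (.refl h) fun v w hvw =>
      ⟨fun H => .trans _ _ _ (.symm _ _ (.rel _ _ hvw)) H, fun H => .trans _ _ _ (.rel _ _ hvw) H⟩
  have hker : Subgroup.normalClosure (A.rels a b h n) ≤ φ.ker := by
    refine Subgroup.normalClosure_le_normal ?_
    rintro w (hw | rfl)
    · exact hφ w hw
    · have hx : ∀ i j, Commute (φ (of (x i))) (φ (of (x j))) := fun i j => by
        have h1 := hφ _ (.comm i j)
        rw [map_relator_eq_one_iff, map_mul, map_mul] at h1
        exact h1
      have h1 : φ (A.lineWord a b n) = vecProd (fun i => φ (of (x i))) (a + (n : ℤ) • b) := by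
        rw [vecProd_add_nsmul hx, lineWord, map_mul, map_pow, map_vecProd, map_vecProd]
      have h2 := hφk _ H
      rw [map_conjT, conjT, conj_pow] at h2
      simp only [SetLike.mem_coe, MonoidHom.mem_ker, squareRel, map_mul, map_inv, map_pow, h1, h2]
      simp
  exact fun he => hφe (hker he)

end AffineSystem

namespace FreeGroup

/-- The automorphisms of the free group on `ℤ` that translate the generators. -/
def translate : Multiplicative ℤ →* MulAut (FreeGroup ℤ) where
  toFun m := freeGroupCongr (Equiv.addLeft m.toAdd)
  map_one' := MulEquiv.toMonoidHom_injective (FreeGroup.ext_hom _ _ fun i => by simp)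
  map_mul' a b := MulEquiv.toMonoidHom_injective (FreeGroup.ext_hom _ _ fun i => by
    simp [add_assoc])

/-- The elements `aⁱ b a⁻ⁱ` of the free group on `a` and `b` are free generators. -/
theorem injective_lift_conj_zpow : Function.Injective
    (lift fun i : ℤ => of true ^ i * of false * (of true ^ i)⁻¹ : FreeGroup ℤ →* _) := by
  let φ : FreeGroup Bool →* FreeGroup ℤ ⋊[translate] Multiplicative ℤ :=
    lift fun b => bif b then .inr (.ofAdd 1) else .inl (of 0)
  have hφ : φ.comp (lift fun i : ℤ => of true ^ i * of false * (of true ^ i)⁻¹) =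
      SemidirectProduct.inl := by
    refine FreeGroup.ext_hom _ _ fun i => ?_
    have h1 : translate (.ofAdd i) (of 0) = of i := by simp [translate]
    have h2 : φ (of true ^ i) = .inr (.ofAdd i) := by
      rw [map_zpow, show φ (of true) = .inr (.ofAdd 1) from lift_apply_of, ← map_zpow,
        ← ofAdd_zsmul, smul_eq_mul, mul_one]
    have h3 : φ (of false) = .inl (of 0) := lift_apply_of
    rw [MonoidHom.comp_apply, lift_apply_of, ← h1, SemidirectProduct.inl_aut,
      _root_.map_mul, _root_.map_mul, _root_.map_inv, h2, h3, _root_.map_inv]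
  refine Function.Injective.of_comp (f := φ) ?_
  rw [← MonoidHom.coe_comp, hφ]
  exact SemidirectProduct.inl_injective

theorem exists_injective_bool (X : Type*) [Countable X] :
    ∃ j : FreeGroup X →* FreeGroup Bool, Function.Injective j := by
  obtain ⟨c, hc⟩ := exists_injective_nat X
  exact ⟨(lift _).comp (map fun x => (c x : ℤ)), injective_lift_conj_zpow.comp
    (map_injective (Nat.cast_injective.comp hc))⟩

end FreeGroup

section ComputableWord

variable {n : ℕ} {R : Set (FreeGroup (Fin n))}

/-- A sequence of elements of a presented group is represented by a computable sequence of words. -/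
def HasComputableWords (R : Set (FreeGroup (Fin n))) (g : ℕ → PresentedGroup R) : Prop :=
  ∃ w : ℕ → List (Fin n × Bool), Primrec w ∧ ∀ m, PresentedGroup.mk R (FreeGroup.mk (w m)) = g m

theorem PresentedGroup.exists_word (g : PresentedGroup R) :
    ∃ u, PresentedGroup.mk R (FreeGroup.mk u) = g := by
  obtain ⟨w, rfl⟩ := PresentedGroup.mk_surjective R g
  exact ⟨w.toWord, by rw [FreeGroup.mk_toWord]⟩

namespace HasComputableWords

theorem const (g : PresentedGroup R) : HasComputableWords R fun _ => g := by
  obtain ⟨u, hu⟩ := g.exists_word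
  exact ⟨fun _ => u, .const u, fun _ => hu⟩

theorem mul {g h : ℕ → PresentedGroup R} (hg : HasComputableWords R g)
    (hh : HasComputableWords R h) : HasComputableWords R fun m => g m * h m := by
  obtain ⟨u, hu, hug⟩ := hg
  obtain ⟨v, hv, hvh⟩ := hh
  exact ⟨fun m => u m ++ v m, Primrec.list_append.comp hu hv, fun m => by
    rw [← FreeGroup.mul_mk, map_mul, hug, hvh]⟩

theorem inv {g : ℕ → PresentedGroup R} (hg : HasComputableWords R g) :
    HasComputableWords R fun m => (g m)⁻¹ := by
  obtain ⟨u, hu, hug⟩ := hg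
  refine ⟨fun m => FreeGroup.invRev (u m), Primrec.list_reverse.comp (Primrec.list_map hu
    (Primrec.pair (Primrec.fst.comp .snd) (Primrec.not.comp (Primrec.snd.comp .snd)))), fun m => ?_⟩
  rw [← FreeGroup.inv_mk, map_inv, hug]

theorem pow (g : PresentedGroup R) : HasComputableWords R fun m => g ^ m := by
  obtain ⟨u, hu⟩ := g.exists_word
  refine ⟨fun m => m.rec [] fun _ v => u ++ v, Primrec.nat_rec₁ _
    (Primrec.list_append.comp (.const u) .snd).to₂, fun m => ?_⟩
  induction m with
  | zero => exact (map_one (PresentedGroup.mk R)).trans (pow_zero g).symm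
  | succ m ih =>
    simp only [pow_succ', ← ih]
    rw [← FreeGroup.mul_mk, map_mul, hu]

end HasComputableWords

theorem exists_words_eq {s : Set (PresentedGroup R)} (hs : s.Finite) :
    ∃ S : List (List (Fin n × Bool)),
      {g | ∃ u ∈ S, g = PresentedGroup.mk R (FreeGroup.mk u)} = s := by
  choose u hu using PresentedGroup.exists_word (R := R)
  refine ⟨hs.toFinset.toList.map u, Set.ext fun g => ⟨?_, fun hg => ?_⟩⟩
  · rintro ⟨_, hv, rfl⟩
    obtain ⟨g, hg, rfl⟩ := List.mem_map.1 hv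
    simpa [hu] using hg
  · exact ⟨u g, List.mem_map_of_mem (by simpa using hg), (hu g).symm⟩

end ComputableWord

namespace AffineSystem

open FreeGroup (of)
open Gen

variable {I : Type} (A : AffineSystem I)

theorem hasComputableWords_squareRel [Fintype I] {n : ℕ} {R : Set (FreeGroup (Fin n))}
    (ψ : FreeGroup A.Gen →* PresentedGroup R) (a b : I → ℤ) :
    HasComputableWords R fun m => ψ (A.squareRel (A.lineWord a b m)) := by
  have h1 : HasComputableWords R fun m => ψ (A.lineWord a b m) := by
    simp only [lineWord, map_mul, map_pow]
    exact .mul (.const _) (.pow _)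
  simp only [squareRel, map_mul, map_inv]
  exact .mul (.mul (.mul (.const _) (.mul (.mul h1 (.const _)) (.inv h1))) (.const _))
    (.inv (.mul (.mul h1 (.const _)) (.inv h1)))

instance [Finite I] : Finite A.Gen := by
  have := A.finite_rule
  refine Finite.of_surjective (α := (I ⊕ I) ⊕ (A.Rule ⊕ Bool) ⊕ Fin 5) (fun
    | .inl (.inl i) => x i
    | .inl (.inr i) => y i
    | .inr (.inl (.inl r)) => rule r
    | .inr (.inl (.inr b)) => d b
    | .inr (.inr j) => ![t, k, e, z, p] j) ?_
  rintro (i | _ | _ | _ | b | r | i | _ | _)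
  exacts [⟨.inl (.inl i), rfl⟩, ⟨.inr (.inr 0), rfl⟩, ⟨.inr (.inr 1), rfl⟩, ⟨.inr (.inr 2), rfl⟩,
    ⟨.inr (.inl (.inr b)), rfl⟩, ⟨.inr (.inl (.inl r)), rfl⟩, ⟨.inl (.inr i), rfl⟩,
    ⟨.inr (.inr 3), rfl⟩, ⟨.inr (.inr 4), rfl⟩]

theorem finite_fixedRel [Fintype I] (h : I → ℤ) : {w | A.FixedRel h w}.Finite := by
  have := A.finite_rule
  let relators : (I × I) ⊕ A.Rule ⊕ (A.Rule × I) ⊕ A.Rule ⊕ Unit ⊕ I ⊕ Unit ⊕ Unit ⊕ Unit ⊕ Bool →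
      {w // A.FixedRel h w} := Sum.elim (fun i => ⟨_, .comm i.1 i.2⟩) <|
    Sum.elim (fun r => ⟨_, .rule_t r⟩) <| Sum.elim (fun r => ⟨_, .rule_x r.1 r.2⟩) <|
    Sum.elim (fun r => ⟨_, .rule_k r⟩) <| Sum.elim (fun _ => ⟨_, .k_comm⟩) <|
    Sum.elim (fun i => ⟨_, .y i⟩) <| Sum.elim (fun _ => ⟨_, .z⟩) <|
    Sum.elim (fun _ => ⟨_, .p⟩) <| Sum.elim (fun _ => ⟨_, .e⟩) fun b => ⟨_, .d b⟩
  refine Set.finite_coe_iff.1 <| Finite.of_surjective relators ?_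
  rintro ⟨_, hw⟩
  cases hw <;> simp [relators]

end AffineSystem

/-- An injective homomorphism on a product carries the fiber square of a presented quotient to the
subgroup generated by the images of the diagonal and of the relators. -/
theorem nonempty_fiberSquare_mulEquiv_closure {X G : Type*} [Group G]
    {Ψ : FreeGroup X × FreeGroup X →* G} (hΨ : Function.Injective Ψ) (rels : Set (FreeGroup X)) :
    Nonempty (fiberSquare (Subgroup.normalClosure rels) ≃* Subgroup.closure
      (Set.range (fun x => Ψ (.of x, .of x)) ∪ (fun w => Ψ (1, w)) '' rels)) := by
  refine ⟨((fiberSquare _).equivMapOfInjective Ψ hΨ).trans (MulEquiv.subgroupCongr ?_)⟩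
  rw [fiberSquare_normalClosure, MonoidHom.map_closure, Set.image_union, ← Set.range_comp,
    Set.image_image]
  rfl

namespace AffineSystem

open FreeGroup (of)
open Gen

variable {I : Type} [Fintype I] [DecidableEq I] (A : AffineSystem I)

/-- The fiber square attached to the point `a + m • b` is isomorphic to the collapsed one exactly
if the point is connected to `h`. -/
theorem nonempty_fiberSquare_rels_mulEquiv_iff (a b h : I → ℤ) (m : ℕ) :
    Nonempty (fiberSquare (Subgroup.normalClosure (A.rels a b h m)) ≃*
      fiberSquare (Subgroup.normalClosure A.baseRels)) ↔
    Relation.EqvGen A.Step (a + (m : ℤ) • b) h := by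
  refine ⟨fun ⟨E⟩ => ?_, fun H => ⟨MulEquiv.subgroupCongr ?_⟩⟩
  · by_contra H
    have hd : ¬ Commute (of (d false) : FreeGroup A.Gen) (of (d true)) := fun hc => by
      have h1 := hc.map (FreeGroup.lift fun
        | d false => Equiv.swap (0 : Fin 3) 1
        | d true => Equiv.swap (1 : Fin 3) 2
        | _ => 1)
      rw [FreeGroup.lift_apply_of, FreeGroup.lift_apply_of] at h1
      have h2 : ¬ Commute (Equiv.swap (0 : Fin 3) 1) (Equiv.swap 1 2) := by
        rw [commute_iff_eq]; decide
      exact h2 h1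
    have hfixed : ∀ w, A.FixedRel h w → w ∈ Subgroup.normalClosure (A.rels a b h m) :=
      fun w hw => Subgroup.subset_normalClosure (Or.inl hw)
    have hbase : ∀ c, of (d c) ∈ Subgroup.normalClosure A.baseRels := fun c =>
      Subgroup.subset_normalClosure ⟨d c, trivial, rfl⟩
    exact (isEmpty_fiberSquare_mulEquiv hd (hfixed _ (.d _)) (hfixed _ (.d _)) (hbase _) (hbase _)
      (A.of_e_notMem_normalClosure_rels H) (hfixed _ .e)
      A.mem_normalClosure_baseRels_of_sq_mem).false E
  · ext g
    rw [mem_fiberSquare, mem_fiberSquare, QuotientGroup.eq, QuotientGroup.eq,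
      A.normalClosure_rels_eq H]

end AffineSystem

/-- If a finitely presented group `G = PresentedGroup R` contains a copy of the
product of two nonabelian free groups of rank 2, then the isomorphism problem for
finitely generated subgroups of `G` is unsolvable: no computable function decides
whether the subgroups generated by two given finite lists of words are isomorphic. -/
theorem isomorphism_problem_unsolvable_of_F2xF2 {n : ℕ}
    (R : Set (FreeGroup (Fin n))) (hR : R.Finite)
    (ι : FreeGroup Bool × FreeGroup Bool →* PresentedGroup R)
    (hι : Function.Injective ι) :
    ¬ ∃ f : List (List (Fin n × Bool)) → List (List (Fin n × Bool)) → Bool,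
      Computable₂ f ∧
      ∀ S T : List (List (Fin n × Bool)),
        (f S T = true ↔
          Nonempty (↥(wordsSubgroup R S) ≃* ↥(wordsSubgroup R T))) := by
  rintro ⟨f, hf, hfST⟩
  obtain ⟨I, _, _, A, a, b, h, e, he, hA⟩ := exists_affineSystem_not_computablePred
  obtain ⟨j, hj⟩ := FreeGroup.exists_injective_bool A.Gen
  let Ψ : FreeGroup A.Gen × FreeGroup A.Gen →* PresentedGroup R := ι.comp (j.prodMap j)
  have hΨ : Function.Injective Ψ := hι.comp (hj.prodMap hj)
  let diag : Set (PresentedGroup R) := Set.range fun x => Ψ (.of x, .of x)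
  have hdiag : diag.Finite := Set.finite_range _
  obtain ⟨S, hS⟩ := exists_words_eq
    (hdiag.union ((A.finite_fixedRel h).image fun w => Ψ (1, w)))
  obtain ⟨T, hT⟩ := exists_words_eq
    (hdiag.union ((((Set.toFinite _).image _ : A.baseRels.Finite)).image fun w => Ψ (1, w)))
  obtain ⟨w, hw, hwS⟩ := A.hasComputableWords_squareRel (Ψ.comp (.inr _ _)) a b
  have hST : ∀ m, f (w (e m) :: S) T = true ↔
      Relation.EqvGen A.Step (a + (e m : ℤ) • b) h := fun m => by
    rw [hfST, ← A.nonempty_fiberSquare_rels_mulEquiv_iff]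
    obtain ⟨E₁⟩ := nonempty_fiberSquare_mulEquiv_closure hΨ (A.rels a b h (e m))
    obtain ⟨E₂⟩ := nonempty_fiberSquare_mulEquiv_closure hΨ A.baseRels
    have h1 : wordsSubgroup R (w (e m) :: S) = Subgroup.closure
        (diag ∪ (fun w => Ψ (1, w)) '' A.rels a b h (e m)) := by
      rw [wordsSubgroup, AffineSystem.rels, Set.image_union, ← Set.union_assoc, ← hS]
      congr 1
      ext g
      simp [hwS, or_comm]
    have h2 : wordsSubgroup R T = Subgroup.closure (diag ∪ (fun w => Ψ (1, w)) '' A.baseRels) := by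
      rw [wordsSubgroup, hT, AffineSystem.baseRels]
    rw [h1, h2]
    exact ⟨fun ⟨E⟩ => ⟨(E₁.trans E).trans E₂.symm⟩, fun ⟨E⟩ => ⟨(E₁.symm.trans E).trans E₂⟩⟩
  have hcomp : Computable fun m => f (w (e m) :: S) T :=
    hf.comp (Computable.list_cons.comp (hw.to_comp.comp he) (.const S)) (.const T)
  refine hA (ComputablePred.computable_iff.2 ⟨_, hcomp, funext fun m => propext (hST m).symm⟩)
end

section
/- Every subgroup of an RFRS group is RFRS: if G is a group admitting a sequence G = G₀ ≥ G₁ ≥ G₂ ≥ … of finite-index normal subgroups of G with trivial intersection such that for each i every element of Gᵢ whose image in the abelianization of Gᵢ is torsion lies in Gᵢ₊₁, then every subgroup H ≤ G admits such a sequence as well (witnessed by Hᵢ = Gᵢ ∩ H). -/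
/-- Every subgroup of an RFRS group is RFRS, witnessed by `Hᵢ = Gᵢ ∩ H`. -/
theorem subgroup_rfrs {G : Type*} [Group G] (Gs : ℕ → Subgroup G)
    (h0 : Gs 0 = ⊤) (hnorm : ∀ i, (Gs i).Normal) (hfi : ∀ i, (Gs i).FiniteIndex)
    (hdec : ∀ i, Gs (i + 1) ≤ Gs i) (hint : (⨅ i, Gs i) = ⊥)
    (hrfrs : ∀ i, ∀ g, ∀ hg : g ∈ Gs i,
      IsOfFinOrder (Abelianization.of (⟨g, hg⟩ : ↥(Gs i))) → g ∈ Gs (i + 1))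
    (H : Subgroup G) :
    ∃ Hs : ℕ → Subgroup ↥H,
      (∀ i, ∀ h : ↥H, h ∈ Hs i ↔ (h : G) ∈ Gs i) ∧
      Hs 0 = ⊤ ∧ (∀ i, (Hs i).Normal) ∧ (∀ i, (Hs i).FiniteIndex) ∧
      (∀ i, Hs (i + 1) ≤ Hs i) ∧ (⨅ i, Hs i) = ⊥ ∧
      ∀ i, ∀ h, ∀ hh : h ∈ Hs i,
        IsOfFinOrder (Abelianization.of (⟨h, hh⟩ : ↥(Hs i))) → h ∈ Hs (i + 1) := by
  refine ⟨fun i => (Gs i).subgroupOf H, fun i h => Subgroup.mem_subgroupOf, ?_,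
    fun i => (hnorm i).subgroupOf H, fun i => ?_, fun i h hh => hdec i hh, ?_, ?_⟩
  · simp [h0]
  · have := hfi i
    infer_instance
  · rw [eq_bot_iff]
    intro h hh
    have hmem : (h : G) ∈ ⨅ i, Gs i := by
      simpa only [Subgroup.mem_iInf, Subgroup.mem_subgroupOf] using hh
    rw [hint, Subgroup.mem_bot] at hmem
    exact Subgroup.mem_bot.mpr (Subtype.ext hmem)
  · intro i h hh hfin
    let inclusion : ↥((Gs i).subgroupOf H) →* ↥(Gs i) := H.subtype.subgroupComap (Gs i)
    have himage := (Abelianization.map inclusion).isOfFinOrder hfin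
    rw [Abelianization.map_of] at himage
    exact hrfrs i h hh himage
end

section
/- Let Γ be a finite simple graph and let a, b ∈ A(Γ) be elements each of which lies in a clique subgroup of A(Γ) (that is, a lies in the subgroup generated by the vertex generators of some complete subgraph of Γ, and likewise for b, possibly a different complete subgraph). If a and b do not commute, then the subgroup of A(Γ) generated by a and b is a free group of rank 2 (a and b freely generate it, i.e. the homomorphism from the free group on two generators sending the generators to a and b is injective). -/
/-- The relators of the right-angled Artin group on a simple graph `Γ`:
one commutator for each edge. -/
def raagRels {V : Type*} (Γ : SimpleGraph V) : Set (FreeGroup V) :=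
  {r | ∃ u v : V, Γ.Adj u v ∧
    r = FreeGroup.of u * FreeGroup.of v * (FreeGroup.of u)⁻¹ * (FreeGroup.of v)⁻¹}

open Function in
/-- Ping-pong criterion for a free basis in terms of the nonzero powers of the generators. -/
theorem FreeGroup.injective_lift_of_zpow_ping_pong {ι G α : Type*} [Nontrivial ι] [Group G]
    [MulAction G α] (a : ι → G) (X : ι → Set α) (hne : ∀ i, (X i).Nonempty)
    (hdisj : Pairwise (Disjoint on X))
    (hpp : ∀ i j, i ≠ j → ∀ n : ℤ, n ≠ 0 → ∀ x ∈ X j, a i ^ n • x ∈ X i) :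
    Injective (FreeGroup.lift a) := by
  have hlift : FreeGroup.lift a =
      (Monoid.CoprodI.lift fun i => FreeGroup.lift fun _ : Unit => a i).comp
        (freeGroupEquivCoprodI (ι := ι)).toMonoidHom := by
    ext i
    simp
  rw [hlift, MonoidHom.coe_comp]
  refine Injective.comp ?_ (MulEquiv.injective freeGroupEquivCoprodI)
  refine Monoid.CoprodI.lift_injective_of_ping_pong
    (fun i => FreeGroup.lift fun _ : Unit => a i) ?_ X hne hdisj ?_
  · obtain ⟨i⟩ : Nonempty ι := inferInstance
    exact Or.inr ⟨i, (Cardinal.natCast_le_aleph0 (n := 3)).trans (Cardinal.aleph0_le_mk _)⟩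
  · intro i j hij
    refine FreeGroup.freeGroupUnitEquivInt.forall_congr_left.mpr fun n hn => ?_
    have hn0 : n ≠ 0 := by
      rintro rfl
      exact hn (by simp [FreeGroup.freeGroupUnitEquivInt])
    rintro _ ⟨x, hx, rfl⟩
    have := hpp i j hij n hn0 x hx
    simpa [FreeGroup.freeGroupUnitEquivInt] using this

/-- The two one-parameter groups of shears of `ℤ × ℤ` by even multiples of a coordinate. -/
def evenShear : Bool → Multiplicative ℤ →* Equiv.Perm (ℤ × ℤ)
  | true => MonoidHom.toHomPerm
      { toFun := fun n p => (p.1 + 2 * n.toAdd * p.2, p.2)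
        map_one' := by funext p; simp [Function.End.one_def]
        map_mul' := fun m n => by
          funext p
          refine Prod.ext ?_ ?_
          · change p.1 + 2 * (m.toAdd + n.toAdd) * p.2 =
              (p.1 + 2 * n.toAdd * p.2) + 2 * m.toAdd * p.2
            ring
          · rfl }
  | false => MonoidHom.toHomPerm
      { toFun := fun n p => (p.1, p.2 + 2 * n.toAdd * p.1)
        map_one' := by funext p; simp [Function.End.one_def]
        map_mul' := fun m n => by
          funext p
          refine Prod.ext ?_ ?_
          · rfl
          · change p.2 + 2 * (m.toAdd + n.toAdd) * p.1 =
              (p.2 + 2 * n.toAdd * p.1) + 2 * m.toAdd * p.1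
            ring }

theorem abs_lt_abs_add_two_mul {x y n : ℤ} (h : |x| < |y|) (hn : n ≠ 0) :
    |y| < |x + 2 * n * y| := by
  have hn1 : 1 ≤ |n| := Int.one_le_abs hn
  have htri : |2 * n * y| ≤ |x + 2 * n * y| + |x| := by
    simpa using abs_sub (x + 2 * n * y) x
  rw [abs_mul, abs_mul, abs_two] at htri
  nlinarith [abs_nonneg y]

/-- Nontrivial elements of the two shear groups freely generate a free group. -/
theorem injective_lift_evenShear (e : Bool → Multiplicative ℤ) (he : ∀ t, e t ≠ 1) :
    Function.Injective (FreeGroup.lift fun t => evenShear t (e t)) := by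
  have hdisj : Disjoint {p : ℤ × ℤ | |p.2| < |p.1|} {p | |p.1| < |p.2|} :=
    Set.disjoint_left.mpr fun p hp hq =>
      lt_asymm (Set.mem_ofPred.mp hp) (Set.mem_ofPred.mp hq)
  refine FreeGroup.injective_lift_of_zpow_ping_pong _
    (fun t => if t then {p : ℤ × ℤ | |p.2| < |p.1|} else {p | |p.1| < |p.2|}) ?_ ?_ ?_
  · rintro (_ | _)
    · exact ⟨(0, 1), by simp⟩
    · exact ⟨(1, 0), by simp⟩
  · rintro (_ | _) (_ | _) h
    · exact absurd rfl h
    · simpa [Function.onFun] using hdisj.symm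
    · simpa [Function.onFun] using hdisj
    · exact absurd rfl h
  · intro i j hij n hn x hx
    have hen : (e i ^ n).toAdd ≠ 0 := by
      have : (e i).toAdd ≠ 0 := he i
      simp [hn, this]
    rw [← map_zpow]
    cases i <;> cases j
    · exact absurd rfl hij
    · exact abs_lt_abs_add_two_mul (by simpa using hx) hen
    · exact abs_lt_abs_add_two_mul (by simpa using hx) hen
    · exact absurd rfl hij

section RightAngledArtin

variable {V : Type*} {Γ : SimpleGraph V}

theorem lift_raagRels_eq_one {G : Type*} [Group G] {f : V → G}
    (hf : ∀ u v, Γ.Adj u v → Commute (f u) (f v)) :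
    ∀ r ∈ raagRels Γ, FreeGroup.lift f r = 1 := by
  rintro r ⟨u, v, huv, rfl⟩
  simp [(hf u v huv).eq]

theorem commute_of_adj {u v : V} (h : Γ.Adj u v) :
    Commute (PresentedGroup.of (rels := raagRels Γ) u) (PresentedGroup.of v) := by
  have := PresentedGroup.one_of_mem (rels := raagRels Γ) ⟨u, v, h, rfl⟩
  simp only [map_mul, map_inv] at this
  exact commutatorElement_eq_one_iff_commute.mp this

open Classical in
/-- The exponent sum of the vertex generator `u`. -/
noncomputable def raagExponent (Γ : SimpleGraph V) (u : V) :
    PresentedGroup (raagRels Γ) →* Multiplicative ℤ :=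
  PresentedGroup.toGroup (f := fun w => if w = u then Multiplicative.ofAdd (1 : ℤ) else 1)
    (lift_raagRels_eq_one fun _ _ _ => Commute.all _ _)

theorem raagExponent_of_self (u : V) :
    raagExponent Γ u (PresentedGroup.of u) = Multiplicative.ofAdd 1 := by
  simp [raagExponent]

theorem raagExponent_of_ne {u w : V} (h : w ≠ u) :
    raagExponent Γ u (PresentedGroup.of w) = 1 := by
  simp [raagExponent, h]

theorem raagExponent_eq_one_of_mem_closure {S : Set V} {u : V} (hu : u ∉ S)
    {a : PresentedGroup (raagRels Γ)}
    (ha : a ∈ Subgroup.closure ((fun v => PresentedGroup.of (rels := raagRels Γ) v) '' S)) :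
    raagExponent Γ u a = 1 := by
  refine MonoidHom.eqOn_closure (f := raagExponent Γ u) (g := 1) ?_ ha
  rintro _ ⟨w, hw, rfl⟩
  exact raagExponent_of_ne fun h => hu (h ▸ hw)

theorem exists_zpow_mul_of_mem_closure_insert {S : Set V} {u : V}
    (hS : Γ.IsClique (insert u S)) (hu : u ∉ S) {a : PresentedGroup (raagRels Γ)}
    (ha : a ∈ Subgroup.closure
      ((fun v => PresentedGroup.of (rels := raagRels Γ) v) '' insert u S)) :
    ∃ n : ℤ, ∃ c ∈ Subgroup.closure ((fun v => PresentedGroup.of (rels := raagRels Γ) v) '' S),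
      a = PresentedGroup.of u ^ n * c := by
  have hcomm : ∀ c ∈ Subgroup.closure ((fun v => PresentedGroup.of (rels := raagRels Γ) v) '' S),
      Commute (PresentedGroup.of u) c := by
    intro c hc
    induction hc using Subgroup.closure_induction with
    | mem x hx =>
      obtain ⟨w, hw, rfl⟩ := hx
      exact commute_of_adj
        (hS (Set.mem_insert u S) (Set.mem_insert_of_mem u hw) fun h => hu (h ▸ hw))
    | one => exact Commute.one_right _
    | mul x y _ _ hx hy => exact hx.mul_right hy
    | inv x _ hx => exact hx.inv_right
  induction ha using Subgroup.closure_induction with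
  | mem x hx =>
    obtain ⟨w, rfl | hw, rfl⟩ := hx
    · exact ⟨1, 1, one_mem _, by simp⟩
    · exact ⟨0, _, Subgroup.subset_closure ⟨w, hw, rfl⟩, by simp⟩
  | one => exact ⟨0, 1, one_mem _, by simp⟩
  | mul x y _ _ hx hy =>
    obtain ⟨m, c, hc, rfl⟩ := hx
    obtain ⟨n, d, hd, rfl⟩ := hy
    refine ⟨m + n, c * d, mul_mem hc hd, ?_⟩
    rw [zpow_add, mul_assoc, ← mul_assoc c, ← ((hcomm c hc).zpow_left n).eq]
    simp only [mul_assoc]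
  | inv x _ hx =>
    obtain ⟨n, c, hc, rfl⟩ := hx
    refine ⟨-n, c⁻¹, inv_mem hc, ?_⟩
    rw [((hcomm c hc).zpow_left n).eq, mul_inv_rev, zpow_neg]

/-- An element of a clique subgroup commutes with everything that commutes with the vertex
generators in its support. -/
theorem commute_of_commute_support {S : Set V} (hfin : S.Finite) (hS : Γ.IsClique S)
    {a g : PresentedGroup (raagRels Γ)}
    (ha : a ∈ Subgroup.closure ((fun v => PresentedGroup.of (rels := raagRels Γ) v) '' S))
    (hg : ∀ u ∈ S, raagExponent Γ u a ≠ 1 → Commute (PresentedGroup.of u) g) :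
    Commute a g := by
  induction S, hfin using Set.Finite.induction_on generalizing a with
  | empty =>
    obtain rfl : a = 1 := by simpa using ha
    exact Commute.one_left g
  | @insert u S hu _ ih =>
    obtain ⟨n, c, hc, rfl⟩ := exists_zpow_mul_of_mem_closure_insert hS hu ha
    refine Commute.mul_left ?_ ?_
    · by_cases hn : n = 0
      · simp [hn]
      · refine (hg u (Set.mem_insert u S) ?_).zpow_left n
        rw [map_mul, raagExponent_eq_one_of_mem_closure hu hc, map_zpow, raagExponent_of_self,
          mul_one, ← Int.ofAdd_mul, one_mul]
        exact hn
    · refine ih (hS.subset (Set.subset_insert u S)) hc fun w hw hwc =>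
        hg w (Set.mem_insert_of_mem u hw) ?_
      rwa [map_mul, map_zpow, raagExponent_of_ne (fun h : u = w => hu (h ▸ hw)), one_zpow, one_mul]

open Classical in
/-- For distinct nonadjacent `u` and `v`, the action of the right-angled Artin group on `ℤ × ℤ`
in which `u` and `v` act by the two shears and the other vertices act trivially. -/
noncomputable def raagShear {u v : V} (huv : ¬ Γ.Adj u v) :
    PresentedGroup (raagRels Γ) →* Equiv.Perm (ℤ × ℤ) :=
  PresentedGroup.toGroup
    (f := fun w => if w = u then evenShear true (Multiplicative.ofAdd 1)
      else if w = v then evenShear false (Multiplicative.ofAdd 1) else 1)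
    (lift_raagRels_eq_one fun x y hxy => by
      have hvu : ¬ Γ.Adj v u := fun h => huv h.symm
      split_ifs <;> first | simp | (subst_vars; contradiction))

theorem raagShear_eq_of_mem_left {u v : V} (huv : ¬ Γ.Adj u v) {S : Set V} (hv : v ∉ S)
    {a : PresentedGroup (raagRels Γ)}
    (ha : a ∈ Subgroup.closure ((fun v => PresentedGroup.of (rels := raagRels Γ) v) '' S)) :
    raagShear huv a = evenShear true (raagExponent Γ u a) := by
  refine MonoidHom.eqOn_closure (f := raagShear huv)
    (g := (evenShear true).comp (raagExponent Γ u)) ?_ ha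
  rintro _ ⟨w, hw, rfl⟩
  have hwv : w ≠ v := fun h => hv (h ▸ hw)
  by_cases hwu : w = u <;> simp [raagShear, raagExponent, hwu, hwv]

theorem raagShear_eq_of_mem_right {u v : V} (huv : ¬ Γ.Adj u v) {S : Set V} (hu : u ∉ S)
    {b : PresentedGroup (raagRels Γ)}
    (hb : b ∈ Subgroup.closure ((fun v => PresentedGroup.of (rels := raagRels Γ) v) '' S)) :
    raagShear huv b = evenShear false (raagExponent Γ v b) := by
  refine MonoidHom.eqOn_closure (f := raagShear huv)
    (g := (evenShear false).comp (raagExponent Γ v)) ?_ hb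
  rintro _ ⟨w, hw, rfl⟩
  have hwu : w ≠ u := fun h => hu (h ▸ hw)
  by_cases hwv : w = v
  · subst hwv
    simp [raagShear, raagExponent, hwu]
  · simp [raagShear, raagExponent, hwu, hwv]

end RightAngledArtin

/-- Two non-commuting elements of clique subgroups of a right-angled Artin group
freely generate a free group of rank 2. -/
theorem free_of_noncommuting_clique_elements {V : Type*} [Fintype V]
    (Γ : SimpleGraph V) (a b : PresentedGroup (raagRels Γ))
    (Sa Sb : Set V) (hSa : Γ.IsClique Sa) (hSb : Γ.IsClique Sb)
    (ha : a ∈ Subgroup.closure ((fun v => PresentedGroup.of (rels := raagRels Γ) v) '' Sa))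
    (hb : b ∈ Subgroup.closure ((fun v => PresentedGroup.of (rels := raagRels Γ) v) '' Sb))
    (hcomm : ¬ Commute a b) :
    Function.Injective (FreeGroup.lift (fun t : Bool => if t then a else b)) := by
  obtain ⟨u, hu, hua, v, hv, hvb, hnc⟩ : ∃ u ∈ Sa, raagExponent Γ u a ≠ 1 ∧
      ∃ v ∈ Sb, raagExponent Γ v b ≠ 1 ∧
        ¬ Commute (PresentedGroup.of (rels := raagRels Γ) u) (PresentedGroup.of v) := by
    by_contra! h
    refine hcomm (commute_of_commute_support Sa.toFinite hSa ha fun u hu hua => ?_)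
    exact (commute_of_commute_support Sb.toFinite hSb hb
      fun v hv hvb => (h u hu hua v hv hvb).symm).symm
  have huv : ¬ Γ.Adj u v := fun h => hnc (commute_of_adj h)
  have hne : u ≠ v := by
    rintro rfl
    exact hnc (Commute.refl _)
  have hvSa : v ∉ Sa := fun h => huv (hSa hu h hne)
  have huSb : u ∉ Sb := fun h => huv (hSb h hv hne)
  have hinj := injective_lift_evenShear
    (fun t => if t then raagExponent Γ u a else raagExponent Γ v b)
    (by rintro (_ | _) <;> simpa)
  refine Function.Injective.of_comp (f := raagShear huv) ?_
  rw [← MonoidHom.coe_comp]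
  convert hinj using 2
  ext1 t
  cases t
  · simp [raagShear_eq_of_mem_right huv huSb hb]
  · simp [raagShear_eq_of_mem_left huv hvSa ha]
end

section
/- Left greedy normal form: Let Γ be a finite simple graph. For every element g of A(Γ) there exist k ≥ 0, cliques S₁,…,S_k of Γ, and functions eᵢ : Sᵢ → ℤ with eᵢ(v) ≠ 0 for all v ∈ Sᵢ, such that g = w_k · w_{k-1} ⋯ w_1, where wᵢ = ∏_{v ∈ Sᵢ} v^{eᵢ(v)} (a central word: a product of nonzero powers of pairwise-commuting vertex generators), and such that for each 1 ≤ i < k and each vertex v ∈ Sᵢ, the vertex generator v does not commute with the element w_{i+1} in A(Γ). -/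
namespace RightAngledArtin

/-- The vertex `x` is blocked by the exponent vector `f` if some vertex in the support of `f` is
neither equal nor adjacent to `x`. -/
def Blocks {V : Type*} (Γ : SimpleGraph V) (f : V → ℤ) (x : V) : Prop :=
  ∃ u, f u ≠ 0 ∧ u ≠ x ∧ ¬ Γ.Adj u x

/-- The product over the vertices in `l` of the powers prescribed by `f`. -/
def listWord {V : Type*} (Γ : SimpleGraph V) (l : List V) (f : V → ℤ) :
    PresentedGroup (raagRels Γ) :=
  (l.map fun v => PresentedGroup.of (rels := raagRels Γ) v ^ f v).prod

/-- The product `w_k ⋯ w_1` of the words of a list `[f_1, …, f_k]` of exponent vectors. -/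
def blockProd {V : Type*} (Γ : SimpleGraph V) (l : List V) (L : List (V → ℤ)) :
    PresentedGroup (raagRels Γ) :=
  (L.map (listWord Γ l)).reverse.prod

/-- A list of nonzero exponent vectors supported on cliques in which every vertex of a block is
blocked by the next block. -/
structure IsNormal {V : Type*} (Γ : SimpleGraph V) (L : List (V → ℤ)) : Prop where
  ne_zero : ∀ f ∈ L, f ≠ 0
  clique : ∀ f ∈ L, Γ.IsClique {v | f v ≠ 0}
  chain : L.IsChain fun f f' => ∀ x, f x ≠ 0 → Blocks Γ f' x

variable {V : Type*} {Γ : SimpleGraph V}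

theorem commute_of_adj {u v : V} (h : Γ.Adj u v) :
    Commute (PresentedGroup.of (rels := raagRels Γ) u) (PresentedGroup.of v) := by
  have h1 : PresentedGroup.mk (raagRels Γ)
      (FreeGroup.of u * FreeGroup.of v * (FreeGroup.of u)⁻¹ * (FreeGroup.of v)⁻¹) = 1 :=
    PresentedGroup.one_of_mem ⟨u, v, h, rfl⟩
  simp only [map_mul, map_inv] at h1
  exact mul_inv_eq_iff_eq_mul.1 (mul_inv_eq_one.1 h1)

theorem commute_zpow_of_not_blocks {f : V → ℤ} {v : V} (h : ¬ Blocks Γ f v) (u : V) :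
    Commute (PresentedGroup.of (rels := raagRels Γ) v) (PresentedGroup.of u ^ f u) := by
  by_cases hu : f u = 0
  · simp [hu]
  · by_cases huv : u = v
    · subst huv
      exact (Commute.refl _).zpow_right _
    · have : Γ.Adj u v := by
        by_contra hn
        exact h ⟨u, hu, huv, hn⟩
      exact (commute_of_adj this).symm.zpow_right _

theorem commute_listWord_of_not_blocks {f : V → ℤ} {v : V} (l : List V) (h : ¬ Blocks Γ f v) :
    Commute (PresentedGroup.of (rels := raagRels Γ) v) (listWord Γ l f) := by
  refine Commute.list_prod_right _ _ fun y hy => ?_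
  obtain ⟨u, -, rfl⟩ := List.mem_map.1 hy
  exact commute_zpow_of_not_blocks h u

theorem listWord_add_single_of_notMem [DecidableEq V] (f : V → ℤ) {v : V} (n : ℤ) {l : List V}
    (hv : v ∉ l) : listWord Γ l (f + Pi.single v n) = listWord Γ l f := by
  unfold listWord
  congr 1
  refine List.map_congr_left fun u hu => ?_
  have : u ≠ v := fun h => hv (h ▸ hu)
  simp [this]

theorem listWord_add_single [DecidableEq V] {f : V → ℤ} {v : V} (n : ℤ) {l : List V}
    (hl : l.Nodup) (hv : v ∈ l) (h : ¬ Blocks Γ f v) :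
    listWord Γ l (f + Pi.single v n) = listWord Γ l f * PresentedGroup.of v ^ n := by
  induction l with
  | nil => simp at hv
  | cons a l ih =>
    have hcons : ∀ f' : V → ℤ, listWord Γ (a :: l) f' =
        PresentedGroup.of a ^ f' a * listWord Γ l f' := fun f' => by simp [listWord]
    rw [hcons, hcons]
    rw [List.nodup_cons] at hl
    by_cases hva : v = a
    · subst hva
      rw [listWord_add_single_of_notMem f n hl.1, mul_assoc,
        ← ((commute_listWord_of_not_blocks l h).zpow_left n).eq, ← mul_assoc]
      simp [zpow_add]
    · have hvl : v ∈ l := (List.mem_cons.1 hv).resolve_left hva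
      rw [ih hl.2 hvl, mul_assoc]
      simp [Ne.symm hva]

theorem listWord_zero (l : List V) : listWord Γ l 0 = 1 := by
  simp [listWord]

theorem blockProd_cons (l : List V) (f : V → ℤ) (L : List (V → ℤ)) :
    blockProd Γ l (f :: L) = blockProd Γ l L * listWord Γ l f := by
  simp [blockProd]

theorem isNormal_cons {f : V → ℤ} {L : List (V → ℤ)} :
    IsNormal Γ (f :: L) ↔ f ≠ 0 ∧ Γ.IsClique {v | f v ≠ 0} ∧
      (∀ f' ∈ L.head?, ∀ x, f x ≠ 0 → Blocks Γ f' x) ∧ IsNormal Γ L := by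
  constructor
  · rintro ⟨h0, hc, hR⟩
    rw [List.isChain_cons] at hR
    simp only [List.forall_mem_cons] at h0 hc
    exact ⟨h0.1, hc.1, hR.1, h0.2, hc.2, hR.2⟩
  · rintro ⟨h0, hc, hR, h0', hc', hR'⟩
    refine ⟨?_, ?_, ?_⟩
    · simpa using ⟨h0, h0'⟩
    · exact List.forall_mem_cons.2 ⟨hc, hc'⟩
    · exact List.isChain_cons.2 ⟨hR, hR'⟩

theorem eq_or_ne_zero_of_add_single [DecidableEq V] {f : V → ℤ} {v u : V} {n : ℤ}
    (h : (f + Pi.single v n : V → ℤ) u ≠ 0) : u = v ∨ f u ≠ 0 := by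
  by_cases huv : u = v
  · exact Or.inl huv
  · right
    simpa [huv] using h

/-- A power of a vertex can be merged into a block that does not block it, provided the next
block does. -/
theorem exists_merge [DecidableEq V] {l : List V} (hl : l.Nodup) {v : V} (hv : v ∈ l) (n : ℤ)
    {f : V → ℤ} {L : List (V → ℤ)} (hN : IsNormal Γ (f :: L)) (hf : ¬ Blocks Γ f v)
    (hL : ∀ f' ∈ L.head?, Blocks Γ f' v) :
    ∃ L', IsNormal Γ L' ∧
      blockProd Γ l L' = blockProd Γ l (f :: L) * PresentedGroup.of v ^ n ∧
      ∀ x, (v = x ∨ Γ.Adj v x) → Blocks Γ f x → ∃ h ∈ L'.head?, Blocks Γ h x := by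
  obtain ⟨-, hc, hR, hNL⟩ := isNormal_cons.1 hN
  have hadj : ∀ u, f u ≠ 0 → u ≠ v → Γ.Adj u v := fun u hu huv => by
    by_contra hn
    exact hf ⟨u, hu, huv, hn⟩
  have hkeep : ∀ x, (v = x ∨ Γ.Adj v x) → Blocks Γ f x → Blocks Γ (f + Pi.single v n) x := by
    rintro x hx ⟨u, hu, hux, hnu⟩
    have huv : u ≠ v := by
      rintro rfl
      exact hx.elim hux hnu
    exact ⟨u, by simpa [huv] using hu, hux, hnu⟩
  have hprod := listWord_add_single n hl hv hf
  by_cases h0 : f + Pi.single v n = 0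
  · refine ⟨L, hNL, ?_, fun x hx hb => ?_⟩
    · rw [blockProd_cons, mul_assoc, ← hprod, h0, listWord_zero, mul_one]
    · obtain ⟨u, hu, -⟩ := hkeep x hx hb
      exact absurd (congrFun h0 u) hu
  · refine ⟨(f + Pi.single v n) :: L, isNormal_cons.2 ⟨h0, ?_, ?_, hNL⟩, ?_, fun x hx hb =>
      ⟨_, rfl, hkeep x hx hb⟩⟩
    · intro a ha b hb hab
      rcases eq_or_ne_zero_of_add_single ha with rfl | ha'
      · rcases eq_or_ne_zero_of_add_single hb with rfl | hb'
        · exact absurd rfl hab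
        · exact (hadj b hb' hab.symm).symm
      · rcases eq_or_ne_zero_of_add_single hb with rfl | hb'
        · exact hadj a ha' hab
        · exact hc ha' hb' hab
    · intro f' hf' x hx
      rcases eq_or_ne_zero_of_add_single hx with rfl | hx'
      · exact hL f' hf'
      · exact hR f' hf' x hx'
    · rw [blockProd_cons, blockProd_cons, mul_assoc, hprod]

/-- Right multiplication by a power of a vertex that is not blocked by the first block. The new
first block still blocks all vertices compatible with `v` that the old one blocked. -/
theorem exists_insert_of_not_blocks [DecidableEq V] {l : List V} (hl : l.Nodup) {v : V}
    (hv : v ∈ l) (n : ℤ) (L : List (V → ℤ)) (f : V → ℤ) (hN : IsNormal Γ (f :: L))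
    (hf : ¬ Blocks Γ f v) :
    ∃ L', IsNormal Γ L' ∧
      blockProd Γ l L' = blockProd Γ l (f :: L) * PresentedGroup.of v ^ n ∧
      ∀ x, (v = x ∨ Γ.Adj v x) → Blocks Γ f x → ∃ h ∈ L'.head?, Blocks Γ h x := by
  induction L generalizing f with
  | nil => exact exists_merge hl hv n hN hf (by simp)
  | cons f' L ih =>
    by_cases hf' : Blocks Γ f' v
    · exact exists_merge hl hv n hN hf (by simpa using hf')
    · obtain ⟨h0, hc, hR, hNL⟩ := isNormal_cons.1 hN
      obtain ⟨L', hN', hprod, hhead⟩ := ih f' hNL hf'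
      refine ⟨f :: L', isNormal_cons.2 ⟨h0, hc, fun h hh x hx => ?_, hN'⟩, ?_,
        fun x _ hb => ⟨f, rfl, hb⟩⟩
      · have hvx : v = x ∨ Γ.Adj v x := by
          by_contra! hn
          exact hf ⟨x, hx, hn.1.symm, fun ha => hn.2 ha.symm⟩
        obtain ⟨h', hh', hb⟩ := hhead x hvx (hR f' rfl x hx)
        exact Option.mem_unique hh hh' ▸ hb
      · rw [blockProd_cons, hprod, blockProd_cons _ f, mul_assoc, mul_assoc,
          ((commute_listWord_of_not_blocks l hf).zpow_left n).eq]

theorem exists_mul_zpow {l : List V} (hl : l.Nodup) {v : V} (hv : v ∈ l) {n : ℤ} (hn : n ≠ 0)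
    {L : List (V → ℤ)} (hN : IsNormal Γ L) :
    ∃ L', IsNormal Γ L' ∧ blockProd Γ l L' = blockProd Γ l L * PresentedGroup.of v ^ n := by
  classical
  by_cases hL : ∀ f ∈ L.head?, Blocks Γ f v
  · have hsupp : ∀ u, (Pi.single v n : V → ℤ) u ≠ 0 → u = v := fun u hu => by
      by_contra huv
      simp [huv] at hu
    refine ⟨Pi.single v n :: L, isNormal_cons.2 ⟨by simpa using hn, ?_, ?_, hN⟩, ?_⟩
    · intro a ha b hb hab
      exact absurd ((hsupp a ha).trans (hsupp b hb).symm) hab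
    · intro f hf x hx
      exact hsupp x hx ▸ hL f hf
    · have := listWord_add_single (Γ := Γ) (f := 0) n hl hv (by simp [Blocks])
      rw [zero_add, listWord_zero, one_mul] at this
      rw [blockProd_cons, this]
  · cases L with
    | nil => simp at hL
    | cons f L =>
      obtain ⟨L', h1, h2, -⟩ :=
        exists_insert_of_not_blocks hl hv n L f hN (by simpa using hL)
      exact ⟨L', h1, h2⟩

theorem exists_isNormal {l : List V} (hl : l.Nodup) (hmem : ∀ v, v ∈ l)
    (g : PresentedGroup (raagRels Γ)) : ∃ L, IsNormal Γ L ∧ blockProd Γ l L = g := by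
  have hg : g ∈ Subgroup.closure (Set.range (PresentedGroup.of (rels := raagRels Γ))) := by
    rw [PresentedGroup.closure_range_of]
    trivial
  induction hg using Subgroup.closure_induction_right with
  | one => exact ⟨[], ⟨by simp, by simp, by simp⟩, by simp [blockProd]⟩
  | mul_right x _ y hy ih =>
    obtain ⟨v, rfl⟩ := hy
    obtain ⟨L, hN, rfl⟩ := ih
    simpa using exists_mul_zpow hl (hmem v) one_ne_zero hN
  | mul_inv_cancel x _ y hy ih =>
    obtain ⟨v, rfl⟩ := hy
    obtain ⟨L, hN, rfl⟩ := ih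
    simpa using exists_mul_zpow hl (hmem v) (neg_ne_zero.2 (one_ne_zero (α := ℤ))) hN

theorem addRight_one_zpow_apply (n x : ℤ) : (Equiv.addRight (1 : ℤ) ^ n) x = x + n := by
  induction n generalizing x with
  | zero => simp
  | succ n ih =>
    rw [zpow_add_one, Equiv.Perm.mul_apply, ih, Equiv.coe_addRight]
    ring
  | pred n ih =>
    rw [zpow_sub_one, Equiv.Perm.mul_apply, ih, Equiv.Perm.inv_def, Equiv.addRight_symm,
      Equiv.coe_addRight]
    ring

theorem not_commute_swap_addRight_zpow {n : ℤ} (hn : n ≠ 0) :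
    ¬ Commute (Equiv.swap (0 : ℤ) 1) (Equiv.addRight (1 : ℤ) ^ n) := by
  intro h
  have h0 := Equiv.congr_fun h.eq 0
  simp only [Equiv.Perm.mul_apply, addRight_one_zpow_apply, Equiv.swap_apply_left,
    Equiv.swap_apply_def] at h0
  split_ifs at h0 <;> omega

/-- A vertex blocked by a clique-supported exponent vector does not commute with its word: map a
blocking vertex to a shift of `ℤ`, the given vertex to a transposition, and all others to `1`. -/
theorem not_commute_of_blocks {l : List V} (hl : l.Nodup) (hmem : ∀ v, v ∈ l) {f : V → ℤ}
    (hc : Γ.IsClique {v | f v ≠ 0}) {x : V} (hx : Blocks Γ f x) :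
    ¬ Commute (PresentedGroup.of (rels := raagRels Γ) x) (listWord Γ l f) := by
  classical
  obtain ⟨u, hu, hux, hnadj⟩ := hx
  have hfx : f x = 0 := by
    by_contra hne
    exact hnadj (hc hu hne hux)
  let φ : V → Equiv.Perm ℤ := fun y =>
    if y = u then Equiv.addRight 1 else if y = x then Equiv.swap 0 1 else 1
  have hφu : φ u = Equiv.addRight 1 := if_pos rfl
  have hφx : φ x = Equiv.swap 0 1 := by simp [φ, Ne.symm hux]
  have hφ1 : ∀ y, y ≠ u → y ≠ x → φ y = 1 := fun y h1 h2 => by simp [φ, h1, h2]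
  have hrel : ∀ r ∈ raagRels Γ, FreeGroup.lift φ r = 1 := by
    rintro r ⟨a, b, hab, rfl⟩
    have hcomm : Commute (φ a) (φ b) := by
      by_cases ha : a ≠ u ∧ a ≠ x
      · simp [hφ1 a ha.1 ha.2]
      by_cases hb : b ≠ u ∧ b ≠ x
      · simp [hφ1 b hb.1 hb.2]
      exfalso
      have ha' : a = u ∨ a = x := by tauto
      have hb' : b = u ∨ b = x := by tauto
      rcases ha' with rfl | rfl <;> rcases hb' with rfl | rfl
      · exact hab.ne rfl
      · exact hnadj hab
      · exact hnadj hab.symm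
      · exact hab.ne rfl
    simp [hcomm.eq]
  intro h
  have hmap := h.map (PresentedGroup.toGroup hrel)
  have hword : PresentedGroup.toGroup hrel (listWord Γ l f) = φ u ^ f u := by
    rw [listWord, map_list_prod, List.map_map, List.prod_map_eq_pow_single u,
      List.count_eq_one_of_mem hl (hmem u)]
    · simp
    · intro y hy _
      by_cases hyx : y = x
      · simp [hyx, hfx]
      · simp [hφ1 y hy hyx]
  rw [hword, PresentedGroup.toGroup.of, hφu, hφx] at hmap
  exact not_commute_swap_addRight_zpow hu hmap

theorem listWord_filter_ne_zero (l : List V) (f : V → ℤ) :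
    listWord Γ (l.filter (f · ≠ 0)) f = listWord Γ l f := by
  induction l with
  | nil => rfl
  | cons a l ih =>
    unfold listWord at ih ⊢
    by_cases ha : f a = 0
    · simpa [ha] using ih
    · simpa [ha] using ih

end RightAngledArtin

/-- Left greedy normal form: every element of `A(Γ)` is a product
`g = w_k ⋯ w_1` of nontrivial central words (products of nonzero powers of the
vertex generators of a clique) such that no vertex generator occurring in `wᵢ`
commutes with `w_{i+1}`. -/
theorem left_greedy_normal_form {V : Type*} [Fintype V] (Γ : SimpleGraph V)
    (g : PresentedGroup (raagRels Γ)) :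
    ∃ (k : ℕ) (S : Fin k → List V) (e : Fin k → V → ℤ)
      (w : Fin k → PresentedGroup (raagRels Γ)),
      (∀ i, (S i).Nodup) ∧ (∀ i, S i ≠ []) ∧
      (∀ i, Γ.IsClique {v | v ∈ S i}) ∧
      (∀ i, ∀ v ∈ S i, e i v ≠ 0) ∧
      (∀ i, w i = ((S i).map
        (fun v => PresentedGroup.of (rels := raagRels Γ) v ^ e i v)).prod) ∧
      g = (List.ofFn w).reverse.prod ∧
      (∀ (i : ℕ) (h : i + 1 < k), ∀ v ∈ S ⟨i, Nat.lt_of_succ_lt h⟩,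
        ¬ Commute (PresentedGroup.of (rels := raagRels Γ) v) (w ⟨i + 1, h⟩)) := by
  have hl : (Finset.univ : Finset V).toList.Nodup := Finset.nodup_toList _
  have hmem : ∀ v, v ∈ (Finset.univ : Finset V).toList := by simp
  generalize (Finset.univ : Finset V).toList = l at hl hmem
  obtain ⟨L, hN, rfl⟩ := RightAngledArtin.exists_isNormal hl hmem g
  refine ⟨L.length, fun i => l.filter (L.get i · ≠ 0), L.get,
    fun i => RightAngledArtin.listWord Γ l (L.get i), fun i => hl.filter _, fun i => ?_,
    fun i => ?_, fun i v hv => ?_, fun i => ?_, ?_, fun i h v hv => ?_⟩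
  · obtain ⟨v, hv⟩ := Function.ne_iff.1 (hN.ne_zero _ (L.get_mem i))
    exact List.ne_nil_of_mem (List.mem_filter.2 ⟨hmem v, by simpa using hv⟩)
  · simpa [hmem] using hN.clique _ (L.get_mem i)
  · simpa using (List.mem_filter.1 hv).2
  · exact (RightAngledArtin.listWord_filter_ne_zero l (L.get i)).symm
  · rw [RightAngledArtin.blockProd]
    congr 2
    rw [← Function.comp_def, ← List.map_ofFn, List.ofFn_get]
  · refine RightAngledArtin.not_commute_of_blocks hl hmem (hN.clique _ (L.get_mem _)) ?_
    exact List.isChain_iff_getElem.1 hN.chain i h v (by simpa using (List.mem_filter.1 hv).2)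
end
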